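/- arXiv:2004.11635 — 2 statements merged into one kernel-verified Lean document; each statement's English description precedes it below -/
import Mathlib

section
/- Let K be a non-Archimedean field, V a K-vector space of finite dimension d, and N, N' two non-Archimedean norms on V. Let N^{∧d} (resp. N'^{∧d}) denote the norm on the one-dimensional top exterior power Λ^d V obtained as the quotient norm of the d-fold tensor power norm N^{⊗d} (resp. N'^{⊗d}) along the canonical surjection V^{⊗d} → Λ^d V. Then for every nonzero ω ∈ Λ^d V, vol(N,N') = (1/d)·(log N'^{∧d}(ω) − log N^{∧d}(ω)). -/
open scoped BigOperators

/-- A non-Archimedean norm on a `K`-vector space `V`. -/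
def IsNAnorm (K : Type*) {V : Type*} [NormedField K] [AddCommGroup V] [Module K V]
    (N : V → ℝ) : Prop :=
  (∀ v, 0 ≤ N v) ∧ (∀ v, N v = 0 ↔ v = 0) ∧
  (∀ (a : K) (v : V), N (a • v) = ‖a‖ * N v) ∧
  (∀ v w : V, N (v + w) ≤ max (N v) (N w))

/-- The sup-distance `d_∞` between two norms on `V`. -/
noncomputable def dInfty {V : Type*} [AddCommGroup V] (N N' : V → ℝ) : ℝ :=
  sSup {r | ∃ v : V, v ≠ 0 ∧ r = |Real.log (N' v) - Real.log (N v)|}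

/-- The `i`-th relative spectral value `λᵢ(N, N')`:
the supremum, over subspaces `W ⊆ V` with `dim W ≥ i`, of
`inf_{w ∈ W ∖ {0}} (log N'(w) − log N(w))`. -/
noncomputable def specVal (K : Type*) {V : Type*} [Field K] [AddCommGroup V] [Module K V]
    (N N' : V → ℝ) (i : ℕ) : ℝ :=
  sSup {r | ∃ W : Submodule K V, i ≤ Module.finrank K W ∧
    r = sInf {s | ∃ w ∈ W, w ≠ (0 : V) ∧ s = Real.log (N' w) - Real.log (N w)}}

/-- The relative volume `vol(N, N') = (1/d)·Σ_{i=1}^d λᵢ(N, N')`, where `d = dim V`. -/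
noncomputable def relVol (K : Type*) (V : Type*) [Field K] [AddCommGroup V] [Module K V]
    (N N' : V → ℝ) : ℝ :=
  (Module.finrank K V : ℝ)⁻¹ *
    ∑ i ∈ Finset.range (Module.finrank K V), specVal K N N' (i + 1)

open scoped TensorProduct

/-- The quotient norm induced by a norm `N` on `V` along a linear map `π`. -/
noncomputable def quotNorm {K V W : Type*} [Field K] [AddCommGroup V] [Module K V]
    [AddCommGroup W] [Module K W] (π : V →ₗ[K] W) (N : V → ℝ) (x : W) : ℝ :=
  sInf {r | ∃ v : V, π v = x ∧ r = N v}

/-- The `m`-fold tensor power norm `N^{⊗m}` on `V^{⊗m}`. -/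
noncomputable def tensorPowNorm (K : Type*) {V : Type*} [NormedField K] [AddCommGroup V]
    [Module K V] (N : V → ℝ) (m : ℕ) (t : ⨂[K]^m V) : ℝ :=
  sInf {r | ∃ (n : ℕ) (v : Fin (n + 1) → Fin m → V),
    t = ∑ i, PiTensorProduct.tprod K (v i) ∧
    r = Finset.univ.sup' Finset.univ_nonempty fun i => ∏ j, N (v i j)}

/-- The canonical surjection `V^{⊗d} → Λ^d V`. -/
noncomputable def tensorToExteriorPower (K V : Type*) [Field K] [AddCommGroup V] [Module K V]
    (d : ℕ) : (⨂[K]^d V) →ₗ[K] ⋀[K]^d V :=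
  LinearMap.codRestrict (⋀[K]^d V)
    (PiTensorProduct.lift (ExteriorAlgebra.ιMulti K d).toMultilinearMap)
    (by
      intro t
      induction t using PiTensorProduct.induction_on with
      | smul_tprod c v =>
        rw [map_smul]
        refine Submodule.smul_mem _ _ ?_
        rw [PiTensorProduct.lift.tprod]
        exact ExteriorAlgebra.ιMulti_range K d ⟨v, rfl⟩
      | add x y hx hy =>
        rw [map_add]
        exact Submodule.add_mem _ hx hy)

/-!
For every `C > 1`, the space `V` has a basis `b` which is `C`-orthogonal for `N` and `N'` at once.
By induction on the dimension it suffices to find a line and a complementary hyperplane such that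
the projections have norm at most `C` for both norms. The line is spanned by a vector `v` almost
maximising `N / N'`, and the hyperplane is the kernel of a linear form that norms `v` for `N`: by
the choice of `v` it then almost norms `v` for `N'` as well.

Order such a basis by decreasing `tᵢ = log N'(bᵢ) - log N(bᵢ)`. The span of the first `i` vectors
and the fact that every `i`-dimensional subspace meets the span of the last `d - i + 1` show that
the `i`-th spectral value is within `log C` of `tᵢ`. On the other hand Hadamard's inequality shows
that the norm of `b₁ ∧ ⋯ ∧ b_d` is `∏ N(bᵢ)` up to a factor `C ^ d`. Hence both sides of the formula
are within `log C` of the mean of the `tᵢ`; let `C` tend to `1`.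
-/

open Module

/-- The difference `log N' - log N`. At `v = 0` it takes a junk value. -/
noncomputable def logRatio {V : Type*} (N N' : V → ℝ) (v : V) : ℝ :=
  Real.log (N' v) - Real.log (N v)

lemma logRatio_comm {V : Type*} (N N' : V → ℝ) (v : V) : logRatio N' N v = -logRatio N N' v :=
  (neg_sub _ _).symm

/-- The infimum of `log N' - log N` over the nonzero vectors of a subspace, whose supremum over
subspaces of dimension at least `i` is the `i`-th spectral value. -/
noncomputable def infLogRatio {K V : Type*} [Field K] [AddCommGroup V] [Module K V]
    (N N' : V → ℝ) (W : Submodule K V) : ℝ :=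
  sInf {s | ∃ w ∈ W, w ≠ 0 ∧ s = logRatio N N' w}

/-- A basis is `C`-orthogonal for `N` if each coordinate term `xᵢ bᵢ` of a vector `x` has norm at
most `C * N x`. For `C = 1` this says that `N x = maxᵢ N (xᵢ bᵢ)`. -/
def IsAlmostOrthogonal {ι K V : Type*} [NormedField K] [AddCommGroup V] [Module K V]
    (N : V → ℝ) (C : ℝ) (b : Basis ι K V) : Prop :=
  ∀ x i, ‖b.repr x i‖ * N (b i) ≤ C * N x

/-- A linear form `φ` with `φ v = 1` whose dual norm is at most `C / N v`; equivalently
`x ↦ φ x • v` is a projection onto the line of `v` of norm at most `C`. -/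
structure IsSupportFunctional {K V : Type*} [NormedField K] [AddCommGroup V] [Module K V]
    (N : V → ℝ) (C : ℝ) (v : V) (φ : V →ₗ[K] K) : Prop where
  apply_self : φ v = 1
  norm_apply_mul_le : ∀ x, ‖φ x‖ * N v ≤ C * N x

/-- The norm on `⋀^m V` induced by `N`, denoted `N^{∧m}`: the quotient of `N^{⊗m}`. -/
noncomputable def extPowNorm (K : Type*) {V : Type*} [NormedField K] [AddCommGroup V]
    [Module K V] (N : V → ℝ) (m : ℕ) : ⋀[K]^m V → ℝ :=
  quotNorm (tensorToExteriorPower K V m) (tensorPowNorm K N m)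

/-! ### Non-Archimedean norms -/

namespace IsNAnorm

variable {K V : Type*} [NormedField K] [AddCommGroup V] [Module K V] {N : V → ℝ}

lemma nonneg (hN : IsNAnorm K N) (v : V) : 0 ≤ N v := hN.1 v

lemma map_zero (hN : IsNAnorm K N) : N 0 = 0 := (hN.2.1 0).2 rfl

lemma map_smul (hN : IsNAnorm K N) (a : K) (v : V) : N (a • v) = ‖a‖ * N v := hN.2.2.1 a v

lemma map_add_le (hN : IsNAnorm K N) (v w : V) : N (v + w) ≤ max (N v) (N w) := hN.2.2.2 v w

lemma pos (hN : IsNAnorm K N) {v : V} (hv : v ≠ 0) : 0 < N v :=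
  (hN.nonneg v).lt_of_ne fun h => hv ((hN.2.1 v).1 h.symm)

lemma map_sub_le (hN : IsNAnorm K N) (v w : V) : N (v - w) ≤ max (N v) (N w) := by
  have h := hN.map_add_le v ((-1 : K) • w)
  rwa [hN.map_smul, norm_neg, norm_one, one_mul, neg_one_smul, ← sub_eq_add_neg] at h

lemma map_sum_le (hN : IsNAnorm K N) {ι : Type*} (s : Finset ι) (f : ι → V) {B : ℝ}
    (hB : 0 ≤ B) (hf : ∀ i ∈ s, N (f i) ≤ B) : N (∑ i ∈ s, f i) ≤ B :=
  Finset.sum_induction f (fun v => N v ≤ B)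
    (fun v w hv hw => (hN.map_add_le v w).trans (max_le hv hw)) (hN.map_zero.trans_le hB) hf

lemma restrict (hN : IsNAnorm K N) (W : Submodule K V) : IsNAnorm K fun w : W => N w :=
  ⟨fun w => hN.nonneg w, fun w => by rw [hN.2.1, ZeroMemClass.coe_eq_zero],
    fun a w => hN.map_smul a w, fun v w => hN.map_add_le v w⟩

lemma normedSpaceCore (hN : IsNAnorm K N) :
    letI : Norm V := ⟨N⟩
    NormedSpace.Core K V :=
  letI : Norm V := ⟨N⟩
  { norm_nonneg := hN.nonneg
    norm_smul := hN.map_smul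
    norm_triangle v w :=
      (hN.map_add_le v w).trans (max_le_add_of_nonneg (hN.nonneg v) (hN.nonneg w))
    norm_eq_zero_iff := hN.2.1 }

end IsNAnorm

/-! ### Support functionals and almost orthogonal bases -/

namespace IsSupportFunctional

variable {K V : Type*} [NormedField K] [AddCommGroup V] [Module K V] {N N' : V → ℝ}
  {C : ℝ} {v : V} {φ : V →ₗ[K] K}

lemma ne_zero (hφ : IsSupportFunctional N C v φ) : φ ≠ 0 := by
  rintro rfl
  simpa using hφ.apply_self

lemma mono (hφ : IsSupportFunctional N C v φ) (hN : IsNAnorm K N) {C' : ℝ} (hC : C ≤ C') :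
    IsSupportFunctional N C' v φ :=
  ⟨hφ.apply_self, fun x =>
    (hφ.norm_apply_mul_le x).trans (mul_le_mul_of_nonneg_right hC (hN.nonneg x))⟩

lemma map_sub_smul_le (hφ : IsSupportFunctional N C v φ) (hN : IsNAnorm K N) (hC : 1 ≤ C)
    (x : V) : N (x - φ x • v) ≤ C * N x := by
  refine (hN.map_sub_le _ _).trans (max_le (le_mul_of_one_le_left (hN.nonneg x) hC) ?_)
  rw [hN.map_smul]
  exact hφ.norm_apply_mul_le x

lemma of_ratio_le (hφ : IsSupportFunctional N C v φ) (hN' : IsNAnorm K N') (hv : 0 < N v)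
    (hC : 0 ≤ C) {c : ℝ} (hc : ∀ x, N x * N' v ≤ c * (N v * N' x)) :
    IsSupportFunctional N' (C * c) v φ := by
  refine ⟨hφ.apply_self, fun x => le_of_mul_le_mul_right ?_ hv⟩
  calc ‖φ x‖ * N' v * N v = ‖φ x‖ * N v * N' v := by ring
    _ ≤ C * N x * N' v :=
      mul_le_mul_of_nonneg_right (hφ.norm_apply_mul_le x) (hN'.nonneg v)
    _ = C * (N x * N' v) := by ring
    _ ≤ C * (c * (N v * N' x)) := mul_le_mul_of_nonneg_left (hc x) hC
    _ = C * c * N' x * N v := by ring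

end IsSupportFunctional

section ConsKer

variable {K V : Type*} [Field K] [AddCommGroup V] [Module K V] {n : ℕ}
  {φ : V →ₗ[K] K} {v : V}

lemma sub_smul_mem_ker (hv : φ v = 1) (x : V) : x - φ x • v ∈ LinearMap.ker φ := by
  simp [hv]

/-- The basis of `V` obtained by prepending `v`, where `φ v = 1`, to a basis of `ker φ`. -/
noncomputable def consKer (hv : φ v = 1) (b : Basis (Fin n) K (LinearMap.ker φ)) :
    Basis (Fin (n + 1)) K V :=
  Basis.mkFinCons v b
    (fun a x hx hax => by
      have h := congrArg φ hax
      rwa [map_add, map_smul, hv, LinearMap.mem_ker.1 hx, map_zero, add_zero, smul_eq_mul,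
        mul_one] at h)
    (fun z => ⟨-φ z, by simp [hv]⟩)

lemma coe_consKer (hv : φ v = 1) (b : Basis (Fin n) K (LinearMap.ker φ)) :
    ⇑(consKer hv b) = Fin.cons v (Subtype.val ∘ b) :=
  Basis.coe_mkFinCons _ _ _ _

lemma consKer_repr (hv : φ v = 1) (b : Basis (Fin n) K (LinearMap.ker φ)) (x : V) :
    ⇑((consKer hv b).repr x) =
      Fin.cons (φ x) (b.repr ⟨x - φ x • v, sub_smul_mem_ker hv x⟩) := by
  have hsum := congrArg Subtype.val (b.sum_repr ⟨x - φ x • v, sub_smul_mem_ker hv x⟩)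
  simp only [Submodule.coe_sum, Submodule.coe_smul] at hsum
  rw [← Basis.equivFun_apply, ← LinearEquiv.eq_symm_apply, Basis.equivFun_symm_apply,
    Fin.sum_univ_succ]
  simp only [coe_consKer, Fin.cons_zero, Fin.cons_succ, Function.comp_apply, hsum,
    add_sub_cancel]

end ConsKer

section AlmostOrthogonal

variable {ι K V : Type*} [NormedField K] [AddCommGroup V] [Module K V] {N N' : V → ℝ} {C : ℝ}

namespace IsAlmostOrthogonal

lemma reindex {ι' : Type*} {b : Basis ι K V} (hb : IsAlmostOrthogonal N C b) (e : ι ≃ ι') :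
    IsAlmostOrthogonal N C (b.reindex e) := fun x i => by
  simpa using hb x (e.symm i)

lemma consKer {n : ℕ} {c c' : ℝ} {φ : V →ₗ[K] K} {v : V}
    {b : Basis (Fin n) K (LinearMap.ker φ)} (hN : IsNAnorm K N) (hc : 1 ≤ c) (hc' : 1 ≤ c')
    (hφ : IsSupportFunctional N c v φ)
    (hb : IsAlmostOrthogonal (fun w : LinearMap.ker φ => N w) c' b) :
    IsAlmostOrthogonal N (c' * c) (consKer hφ.apply_self b) := by
  intro x i
  rw [consKer_repr, coe_consKer, mul_assoc]
  have hcx : 0 ≤ c * N x := mul_nonneg (by linarith) (hN.nonneg x)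
  refine Fin.cases ?_ (fun i => ?_) i
  · exact (hφ.norm_apply_mul_le x).trans (le_mul_of_one_le_left hcx hc')
  · exact (hb _ i).trans
      (mul_le_mul_of_nonneg_left (hφ.map_sub_smul_le hN hc x) (by linarith))

lemma norm_repr_le {b : Basis ι K V} (hb : IsAlmostOrthogonal N C b) (hN : IsNAnorm K N)
    (x : V) (i : ι) : ‖b.repr x i‖ ≤ C / N (b i) * N x := by
  rw [div_mul_eq_mul_div, le_div_iff₀ (hN.pos (b.ne_zero i))]
  exact hb x i

/-- The dominant coordinate of `v`, normalised to take the value `1` at `v`, is a support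
functional: this is the Hahn–Banach theorem up to a constant. -/
lemma exists_isSupportFunctional [Finite ι] {b : Basis ι K V}
    (hb : IsAlmostOrthogonal N C b) (hN : IsNAnorm K N) {v : V} (hv : v ≠ 0) :
    ∃ φ : V →ₗ[K] K, IsSupportFunctional N C v φ := by
  cases nonempty_fintype ι
  have hvpos := hN.pos hv
  obtain ⟨i, hi⟩ : ∃ i, N v ≤ ‖b.repr v i‖ * N (b i) := by
    by_contra! hlt
    have hsum : N (∑ i, b.repr v i • b i) < N v :=
      Finset.sum_induction _ (fun x => N x < N v)
        (fun x y hx hy => (hN.map_add_le x y).trans_lt (max_lt hx hy))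
        (by rwa [hN.map_zero]) fun i _ => by rw [hN.map_smul]; exact hlt i
    exact hsum.ne (by rw [b.sum_repr])
  have hpos : 0 < ‖b.repr v i‖ :=
    pos_of_mul_pos_left (hvpos.trans_le hi) (hN.nonneg _)
  refine ⟨(b.repr v i)⁻¹ • b.coord i, by simp [norm_pos_iff.1 hpos], fun x => ?_⟩
  calc ‖((b.repr v i)⁻¹ • b.coord i) x‖ * N v = ‖b.repr v i‖⁻¹ * ‖b.repr x i‖ * N v := by simp
    _ ≤ ‖b.repr v i‖⁻¹ * ‖b.repr x i‖ * (‖b.repr v i‖ * N (b i)) := by gcongr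
    _ = ‖b.repr x i‖ * N (b i) := by field_simp
    _ ≤ C * N x := hb x i

lemma exists_le_mul [Finite ι] {b : Basis ι K V} (hb : IsAlmostOrthogonal N' C b)
    (hN : IsNAnorm K N) (hN' : IsNAnorm K N') (hC : 0 ≤ C) : ∃ M, ∀ x, N x ≤ M * N' x := by
  cases nonempty_fintype ι
  have hterm : ∀ i, 0 ≤ C / N' (b i) * N (b i) := fun i =>
    mul_nonneg (div_nonneg hC (hN'.nonneg _)) (hN.nonneg _)
  refine ⟨∑ i, C / N' (b i) * N (b i), fun x => ?_⟩
  calc N x = N (∑ i, b.repr x i • b i) := by rw [b.sum_repr]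
    _ ≤ (∑ i, C / N' (b i) * N (b i)) * N' x := by
      refine hN.map_sum_le _ _
        (mul_nonneg (Finset.sum_nonneg fun i _ => hterm i) (hN'.nonneg x)) fun i hi => ?_
      calc N (b.repr x i • b i) = ‖b.repr x i‖ * N (b i) := hN.map_smul _ _
        _ ≤ C / N' (b i) * N' x * N (b i) :=
          mul_le_mul_of_nonneg_right (hb.norm_repr_le hN' x i) (hN.nonneg _)
        _ = C / N' (b i) * N (b i) * N' x := by ring
        _ ≤ (∑ i, C / N' (b i) * N (b i)) * N' x :=
          mul_le_mul_of_nonneg_right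
            (Finset.single_le_sum (f := fun i => C / N' (b i) * N (b i))
              (fun i _ => hterm i) hi) (hN'.nonneg x)

end IsAlmostOrthogonal

/-- Coordinates with respect to `v` are bounded, so the span of `v` is a complete space. -/
lemma isClosed_span_range_of_norm_le {E : Type*} [Fintype ι] [CompleteSpace K]
    [NormedAddCommGroup E] [NormedSpace K E] (v : ι → E) (M : ι → ℝ)
    (hM : ∀ (a : ι → K) (i : ι), ‖a i‖ ≤ M i * ‖∑ j, a j • v j‖) :
    IsClosed (Submodule.span K (Set.range v) : Set E) := by
  let f := Fintype.linearCombination K v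
  have hanti : AntilipschitzWith (Finset.univ.sup fun i => (M i).toNNReal) f := by
    refine AddMonoidHomClass.antilipschitz_of_bound f fun a => ?_
    refine (pi_norm_le_iff_of_nonneg (by positivity)).2 fun i => (hM a i).trans ?_
    refine mul_le_mul_of_nonneg_right ((Real.le_coe_toNNReal _).trans ?_) (norm_nonneg _)
    exact NNReal.coe_le_coe.2 (Finset.le_sup (f := fun i => (M i).toNNReal) (Finset.mem_univ i))
  rw [← Fintype.range_linearCombination]
  exact hanti.isClosed_range (uniformContinuous_addMonoidHom_of_continuous
    (LinearMap.continuous_on_pi f))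

namespace IsNAnorm

lemma exists_notMem_forall_le [Finite ι] [CompleteSpace K] (hN : IsNAnorm K N)
    {W : Submodule K V} {b : Basis ι K W} (hb : IsAlmostOrthogonal (fun w : W => N w) C b)
    (hW : W ≠ ⊤) {r : ℝ} (hr : r < 1) : ∃ x ∉ W, ∀ y ∈ W, r * N x ≤ N (x - y) := by
  cases nonempty_fintype ι
  let : Norm V := ⟨N⟩
  let := NormedAddCommGroup.ofCore hN.normedSpaceCore
  let := NormedSpace.ofCore hN.normedSpaceCore
  have hspan : Submodule.span K (Set.range fun i => (b i : V)) = W := by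
    have h := congrArg (Submodule.map W.subtype) b.span_eq
    rwa [Submodule.map_span, ← Set.range_comp, Submodule.map_subtype_top] at h
  have hclosed : IsClosed (W : Set V) := by
    rw [← hspan]
    refine isClosed_span_range_of_norm_le _ (fun i => C / N (b i)) fun a i => ?_
    have h := hb.norm_repr_le (hN.restrict W) (∑ j, a j • b j) i
    rwa [b.repr_sum_self, Submodule.coe_sum] at h
  exact riesz_lemma hclosed (by simpa [Submodule.eq_top_iff'] using hW) hr

lemma exists_isSupportFunctional_of_ker [Finite ι] [CompleteSpace K] (hN : IsNAnorm K N)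
    {φ : V →ₗ[K] K} (hφ : φ ≠ 0) {b : Basis ι K (LinearMap.ker φ)}
    (hb : IsAlmostOrthogonal (fun w : LinearMap.ker φ => N w) C b) {c : ℝ} (hc : 1 < c) :
    ∃ v, IsSupportFunctional N c v φ := by
  obtain ⟨x, hx, hdist⟩ := hN.exists_notMem_forall_le hb
    (fun h => hφ (LinearMap.ker_eq_top.1 h)) (inv_lt_one_of_one_lt₀ hc)
  rw [LinearMap.mem_ker] at hx
  refine ⟨(φ x)⁻¹ • x, by simp [hx], fun y => ?_⟩
  by_cases hy : φ y = 0
  · rw [hy, norm_zero, zero_mul]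
    exact mul_nonneg (by linarith) (hN.nonneg y)
  have h := hdist (x - (φ x / φ y) • y) (by simp [hy])
  rw [sub_sub_cancel, hN.map_smul, norm_div, inv_mul_le_iff₀ (by linarith)] at h
  have hxy : 0 < ‖φ y‖ / ‖φ x‖ := div_pos (norm_pos_iff.2 hy) (norm_pos_iff.2 hx)
  calc ‖φ y‖ * N ((φ x)⁻¹ • x) = ‖φ y‖ / ‖φ x‖ * N x := by
        rw [hN.map_smul, norm_inv]; ring
    _ ≤ ‖φ y‖ / ‖φ x‖ * (c * (‖φ x‖ / ‖φ y‖ * N y)) := mul_le_mul_of_nonneg_left h hxy.le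
    _ = c * N y := by rw [← inv_div ‖φ y‖]; field_simp

variable [CompleteSpace K] [FiniteDimensional K V]

theorem exists_isAlmostOrthogonal {n : ℕ} (hN : IsNAnorm K N) (hn : finrank K V = n)
    (hC : 1 < C) : ∃ b : Basis (Fin n) K V, IsAlmostOrthogonal N C b := by
  induction n generalizing V C with
  | zero => exact ⟨finBasisOfFinrankEq K V hn, fun _ i => i.elim0⟩
  | succ n ih =>
    have hc : 1 < √C := Real.lt_sqrt_of_sq_lt (by simpa using hC)
    have : Nontrivial V := nontrivial_of_finrank_pos (R := K) (by omega)
    obtain ⟨φ, hφ⟩ := exists_ne (0 : V →ₗ[K] K)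
    have hker : finrank K (LinearMap.ker φ) = n := by
      have := Dual.finrank_ker_add_one_of_ne_zero hφ
      omega
    obtain ⟨b, hb⟩ := ih (hN.restrict (LinearMap.ker φ)) hker hc
    obtain ⟨v, hv⟩ := hN.exists_isSupportFunctional_of_ker hφ hb hc
    have := hb.consKer hN hc.le hc.le hv
    rw [Real.mul_self_sqrt (by linarith)] at this
    exact ⟨_, this⟩

lemma exists_forall_ratio_le [Nontrivial V] (hN : IsNAnorm K N) (hN' : IsNAnorm K N')
    (hC : 1 < C) : ∃ v ≠ 0, ∀ x, N x * N' v ≤ C * (N v * N' x) := by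
  obtain ⟨b, hb⟩ := hN'.exists_isAlmostOrthogonal rfl one_lt_two
  obtain ⟨M, hM⟩ := hb.exists_le_mul hN hN' zero_le_two
  let S : Set ℝ := {r | ∃ x : V, x ≠ 0 ∧ N x / N' x = r}
  have hbdd : BddAbove S := by
    refine ⟨M, ?_⟩
    rintro _ ⟨x, hx, rfl⟩
    exact (div_le_iff₀ (hN'.pos hx)).2 (hM x)
  obtain ⟨u, hu⟩ := exists_ne (0 : V)
  have hpos : 0 < sSup S :=
    (div_pos (hN.pos hu) (hN'.pos hu)).trans_le (le_csSup hbdd ⟨u, hu, rfl⟩)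
  have hne : S.Nonempty := ⟨_, u, hu, rfl⟩
  obtain ⟨_, ⟨v, hv, rfl⟩, hlt⟩ := exists_lt_of_lt_csSup hne (div_lt_self hpos hC)
  refine ⟨v, hv, fun x => ?_⟩
  rcases eq_or_ne x 0 with rfl | hx
  · simp [hN.map_zero, hN'.map_zero]
  have hle : N x / N' x ≤ C * (N v / N' v) :=
    (le_csSup hbdd ⟨x, hx, rfl⟩).trans ((div_lt_iff₀' (by linarith)).1 hlt).le
  rw [← mul_div_assoc, div_le_div_iff₀ (hN'.pos hx) (hN'.pos hv)] at hle
  linarith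

lemma exists_common_isSupportFunctional [Nontrivial V] (hN : IsNAnorm K N)
    (hN' : IsNAnorm K N') (hC : 1 < C) :
    ∃ (v : V) (φ : V →ₗ[K] K), IsSupportFunctional N C v φ ∧ IsSupportFunctional N' C v φ := by
  have hc : 1 < √C := Real.lt_sqrt_of_sq_lt (by simpa using hC)
  have hcC : √C * √C = C := Real.mul_self_sqrt (by linarith)
  obtain ⟨v, hv, hratio⟩ := hN.exists_forall_ratio_le hN' hc
  obtain ⟨b, hb⟩ := hN.exists_isAlmostOrthogonal rfl hc
  obtain ⟨φ, hφ⟩ := hb.exists_isSupportFunctional hN hv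
  refine ⟨v, φ, hφ.mono hN (by nlinarith), ?_⟩
  rw [← hcC]
  exact hφ.of_ratio_le hN' (hN.pos hv) (by linarith) hratio

theorem exists_common_isAlmostOrthogonal {n : ℕ} (hN : IsNAnorm K N) (hN' : IsNAnorm K N')
    (hn : finrank K V = n) (hC : 1 < C) :
    ∃ b : Basis (Fin n) K V, IsAlmostOrthogonal N C b ∧ IsAlmostOrthogonal N' C b := by
  induction n generalizing V C with
  | zero => exact ⟨finBasisOfFinrankEq K V hn, fun _ i => i.elim0, fun _ i => i.elim0⟩
  | succ n ih =>
    have hc : 1 < √C := Real.lt_sqrt_of_sq_lt (by simpa using hC)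
    have : Nontrivial V := nontrivial_of_finrank_pos (R := K) (by omega)
    obtain ⟨v, φ, hφ, hφ'⟩ := hN.exists_common_isSupportFunctional hN' hc
    have hker : finrank K (LinearMap.ker φ) = n := by
      have := Dual.finrank_ker_add_one_of_ne_zero hφ.ne_zero
      omega
    obtain ⟨b, hb, hb'⟩ := ih (hN.restrict (LinearMap.ker φ)) (hN'.restrict _) hker hc
    have h := hb.consKer hN hc.le hc.le hφ
    have h' := hb'.consKer hN' hc.le hc.le hφ'
    rw [Real.mul_self_sqrt (by linarith)] at h h'
    exact ⟨_, h, h'⟩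

theorem exists_common_isAlmostOrthogonal_antitone {n : ℕ} (hN : IsNAnorm K N)
    (hN' : IsNAnorm K N') (hn : finrank K V = n) (hC : 1 < C) :
    ∃ b : Basis (Fin n) K V, IsAlmostOrthogonal N C b ∧ IsAlmostOrthogonal N' C b ∧
      Antitone (logRatio N N' ∘ b) := by
  obtain ⟨b, hb, hb'⟩ := hN.exists_common_isAlmostOrthogonal hN' hn hC
  refine ⟨b.reindex (Tuple.sort (-(logRatio N N' ∘ b))).symm, hb.reindex _, hb'.reindex _, ?_⟩
  have hmono := Tuple.monotone_sort (-(logRatio N N' ∘ b))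
  intro i j hij
  simpa using hmono hij

end IsNAnorm

end AlmostOrthogonal

/-! ### Spectral values -/

section SpectralValues

variable {K V : Type*} [NormedField K] [AddCommGroup V] [Module K V] {N N' : V → ℝ} {C : ℝ}

lemma IsNAnorm.logRatio_le_iff (hN : IsNAnorm K N) (hN' : IsNAnorm K N') {v : V} (hv : v ≠ 0)
    {τ : ℝ} : logRatio N N' v ≤ τ ↔ N' v ≤ Real.exp τ * N v := by
  have hpos := hN.pos hv
  have hpos' := hN'.pos hv
  rw [logRatio, ← Real.log_div hpos'.ne' hpos.ne',
    Real.log_le_iff_le_exp (div_pos hpos' hpos), div_le_iff₀ hpos]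

namespace IsAlmostOrthogonal

section Finite

variable {ι : Type*} [Finite ι] {b : Basis ι K V}

lemma logRatio_le (hb : IsAlmostOrthogonal N C b) (hN : IsNAnorm K N) (hN' : IsNAnorm K N')
    (hC : 0 < C) {x : V} (hx : x ≠ 0) {τ : ℝ}
    (hτ : ∀ i, b.repr x i ≠ 0 → logRatio N N' (b i) ≤ τ) :
    logRatio N N' x ≤ τ + Real.log C := by
  cases nonempty_fintype ι
  have hbound : 0 ≤ Real.exp τ * (C * N x) :=
    mul_nonneg (Real.exp_nonneg τ) (mul_nonneg hC.le (hN.nonneg x))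
  have hterm : ∀ i, ‖b.repr x i‖ * N' (b i) ≤ Real.exp τ * (C * N x) := fun i => by
    by_cases hi : b.repr x i = 0
    · simpa [hi] using hbound
    calc ‖b.repr x i‖ * N' (b i) ≤ ‖b.repr x i‖ * (Real.exp τ * N (b i)) :=
          mul_le_mul_of_nonneg_left ((hN.logRatio_le_iff hN' (b.ne_zero i)).1 (hτ i hi))
            (norm_nonneg _)
      _ = Real.exp τ * (‖b.repr x i‖ * N (b i)) := mul_left_comm _ _ _
      _ ≤ Real.exp τ * (C * N x) := mul_le_mul_of_nonneg_left (hb x i) (Real.exp_nonneg τ)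
  have hsum := hN'.map_sum_le Finset.univ (fun i => b.repr x i • b i) hbound fun i _ =>
    (hN'.map_smul _ _).trans_le (hterm i)
  rw [hN.logRatio_le_iff hN' hx, Real.exp_add, Real.exp_log hC, mul_assoc]
  rwa [b.sum_repr] at hsum

lemma le_logRatio (hb : IsAlmostOrthogonal N' C b) (hN : IsNAnorm K N) (hN' : IsNAnorm K N')
    (hC : 0 < C) {x : V} (hx : x ≠ 0) {τ : ℝ}
    (hτ : ∀ i, b.repr x i ≠ 0 → τ ≤ logRatio N N' (b i)) :
    τ - Real.log C ≤ logRatio N N' x := by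
  have h := hb.logRatio_le hN' hN hC hx (τ := -τ) fun i hi => by
    rw [logRatio_comm]
    exact neg_le_neg (hτ i hi)
  rw [logRatio_comm] at h
  linarith

lemma infLogRatio_le (hb : IsAlmostOrthogonal N' C b) (hN : IsNAnorm K N) (hN' : IsNAnorm K N')
    (hC : 0 < C) {W : Submodule K V} {w : V} (hw : w ∈ W) (hw0 : w ≠ 0) :
    infLogRatio N N' W ≤ logRatio N N' w := by
  obtain ⟨τ, hτ⟩ := Finite.bddBelow_range (logRatio N N' ∘ b)
  refine csInf_le ⟨τ - Real.log C, ?_⟩ ⟨w, hw, hw0, rfl⟩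
  rintro _ ⟨x, -, hx, rfl⟩
  exact hb.le_logRatio hN hN' hC hx fun i _ => hτ (Set.mem_range_self i)

end Finite

end IsAlmostOrthogonal

lemma finrank_span_image {ι : Type*} (b : Basis ι K V) (s : Set ι) [Fintype s] :
    finrank K (Submodule.span K (b '' s)) = Fintype.card s := by
  rw [Set.image_eq_range]
  exact finrank_span_eq_card (b.linearIndependent.comp _ Subtype.val_injective)

lemma exists_mem_repr_support_Ici {d : ℕ} (b : Basis (Fin d) K V) (i : Fin d)
    {W : Submodule K V} (hW : (i : ℕ) + 1 ≤ finrank K W) :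
    ∃ w ∈ W, w ≠ 0 ∧ ∀ j, b.repr w j ≠ 0 → i ≤ j := by
  have : Module.Finite K V := .of_basis b
  have hne : W ⊓ Submodule.span K (b '' Set.Ici i) ≠ ⊥ := by
    intro hbot
    have hdim := Submodule.finrank_sup_add_finrank_inf_eq W (Submodule.span K (b '' Set.Ici i))
    have hle := Submodule.finrank_le (W ⊔ Submodule.span K (b '' Set.Ici i))
    rw [finrank_eq_card_basis b, Fintype.card_fin] at hle
    rw [hbot, finrank_bot, finrank_span_image, Fintype.card_Ici, Fin.card_Ici] at hdim
    omega
  obtain ⟨w, ⟨hwW, hw⟩, hw0⟩ := Submodule.exists_mem_ne_zero_of_ne_bot hne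
  exact ⟨w, hwW, hw0, fun j hj => b.mem_span_image.1 hw (Finsupp.mem_support_iff.2 hj)⟩

namespace IsAlmostOrthogonal

variable {d : ℕ} {b : Basis (Fin d) K V}

lemma infLogRatio_le_of_finrank (hb : IsAlmostOrthogonal N C b) (hb' : IsAlmostOrthogonal N' C b)
    (hN : IsNAnorm K N) (hN' : IsNAnorm K N') (hC : 0 < C) (hanti : Antitone (logRatio N N' ∘ b))
    (i : Fin d) {W : Submodule K V} (hW : (i : ℕ) + 1 ≤ finrank K W) :
    infLogRatio N N' W ≤ logRatio N N' (b i) + Real.log C := by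
  obtain ⟨w, hw, hw0, hsupp⟩ := exists_mem_repr_support_Ici b i hW
  exact (hb'.infLogRatio_le hN hN' hC hw hw0).trans
    (hb.logRatio_le hN hN' hC hw0 fun j hj => hanti (hsupp j hj))

lemma le_infLogRatio_span (hb' : IsAlmostOrthogonal N' C b) (hN : IsNAnorm K N)
    (hN' : IsNAnorm K N') (hC : 0 < C) (hanti : Antitone (logRatio N N' ∘ b)) (i : Fin d) :
    logRatio N N' (b i) - Real.log C ≤
      infLogRatio N N' (Submodule.span K (b '' Set.Iic i)) := by
  refine le_csInf ⟨_, b i, Submodule.subset_span ⟨i, Set.self_mem_Iic, rfl⟩, b.ne_zero i, rfl⟩ ?_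
  rintro _ ⟨w, hw, hw0, rfl⟩
  exact hb'.le_logRatio hN hN' hC hw0 fun j hj =>
    hanti (b.mem_span_image.1 hw (Finsupp.mem_support_iff.2 hj))

theorem abs_specVal_sub_le (hb : IsAlmostOrthogonal N C b) (hb' : IsAlmostOrthogonal N' C b)
    (hN : IsNAnorm K N) (hN' : IsNAnorm K N') (hC : 0 < C) (hanti : Antitone (logRatio N N' ∘ b))
    (i : Fin d) : |specVal K N N' (i + 1) - logRatio N N' (b i)| ≤ Real.log C := by
  have hdim : (i : ℕ) + 1 ≤ finrank K (Submodule.span K (b '' Set.Iic i)) := by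
    rw [finrank_span_image, Fintype.card_Iic, Fin.card_Iic]
  have hub : logRatio N N' (b i) + Real.log C ∈ upperBounds
      {r | ∃ W : Submodule K V, (i : ℕ) + 1 ≤ finrank K W ∧ r = infLogRatio N N' W} := by
    rintro _ ⟨W, hW, rfl⟩
    exact hb.infLogRatio_le_of_finrank hb' hN hN' hC hanti i hW
  rw [abs_sub_le_iff, sub_le_iff_le_add', sub_le_comm]
  exact ⟨csSup_le ⟨_, _, hdim, rfl⟩ hub,
    (hb'.le_infLogRatio_span hN hN' hC hanti i).trans (le_csSup ⟨_, hub⟩ ⟨_, hdim, rfl⟩)⟩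

theorem abs_relVol_sub_le (hb : IsAlmostOrthogonal N C b) (hb' : IsAlmostOrthogonal N' C b)
    (hN : IsNAnorm K N) (hN' : IsNAnorm K N') (hC : 0 < C) (hanti : Antitone (logRatio N N' ∘ b))
    (hd : 0 < d) :
    |relVol K V N N' - (d : ℝ)⁻¹ * ∑ i, logRatio N N' (b i)| ≤ Real.log C := by
  have hd' : (0 : ℝ) < d := Nat.cast_pos.2 hd
  rw [relVol, finrank_eq_card_basis b, Fintype.card_fin, Finset.sum_range, ← mul_sub,
    ← Finset.sum_sub_distrib, abs_mul, abs_of_pos (inv_pos.2 hd'), inv_mul_le_iff₀ hd']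
  calc |∑ i : Fin d, (specVal K N N' (i + 1) - logRatio N N' (b i))|
      ≤ ∑ i : Fin d, |specVal K N N' (i + 1) - logRatio N N' (b i)| :=
        Finset.abs_sum_le_sum_abs _ _
    _ ≤ ∑ _i : Fin d, Real.log C :=
        Finset.sum_le_sum fun i _ => hb.abs_specVal_sub_le hb' hN hN' hC hanti i
    _ = d * Real.log C := by simp

end IsAlmostOrthogonal

end SpectralValues

/-! ### Top exterior power norms -/

section QuotNorm

variable {K V W : Type*} [Field K] [AddCommGroup V] [Module K V] [AddCommGroup W] [Module K W]
  {π : V →ₗ[K] W} {N : V → ℝ} {x : W}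

lemma le_quotNorm {r : ℝ} (hx : x ∈ LinearMap.range π) (hr : ∀ v, π v = x → r ≤ N v) :
    r ≤ quotNorm π N x := by
  obtain ⟨v, hv⟩ := hx
  refine le_csInf ⟨_, v, hv, rfl⟩ ?_
  rintro _ ⟨w, hw, rfl⟩
  exact hr w hw

lemma quotNorm_le (hN : ∀ v, 0 ≤ N v) {v : V} (hv : π v = x) : quotNorm π N x ≤ N v := by
  refine csInf_le ⟨0, ?_⟩ ⟨v, hv, rfl⟩
  rintro _ ⟨w, -, rfl⟩
  exact hN w

end QuotNorm

section TensorPower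

variable {K V : Type*} [NormedField K] [AddCommGroup V] [Module K V] {N : V → ℝ} {m : ℕ}

open PiTensorProduct

lemma tprod_update_smul_self (v : Fin m → V) (i : Fin m) (c : K) :
    tprod K (Function.update v i (c • v i)) = c • tprod K v := by
  rw [MultilinearMap.map_update_smul, Function.update_eq_self]

lemma exists_tprod_eq_smul_tprod (hN : IsNAnorm K N) (hm : 0 < m) (c : K) (v : Fin m → V) :
    ∃ w : Fin m → V, tprod K w = c • tprod K v ∧ ∏ j, N (w j) = ‖c‖ * ∏ j, N (v j) := by
  obtain ⟨n, rfl⟩ := Nat.exists_eq_add_one.2 hm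
  refine ⟨Function.update v 0 (c • v 0), tprod_update_smul_self v 0 c, ?_⟩
  simp [Fin.prod_univ_succ, hN.map_smul, mul_assoc]

lemma exists_eq_sum_tprod (hm : 0 < m) (t : ⨂[K]^m V) :
    ∃ (n : ℕ) (v : Fin (n + 1) → Fin m → V), t = ∑ i, tprod K (v i) := by
  induction t using PiTensorProduct.induction_on with
  | smul_tprod c v =>
    refine ⟨0, fun _ => Function.update v ⟨0, hm⟩ (c • v ⟨0, hm⟩), ?_⟩
    rw [Fin.sum_univ_one, tprod_update_smul_self]
  | add x y hx hy =>
    obtain ⟨n, v, rfl⟩ := hx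
    obtain ⟨k, w, rfl⟩ := hy
    refine ⟨n + 1 + k, (Fin.append v w : Fin ((n + 1) + (k + 1)) → Fin m → V), ?_⟩
    refine Eq.trans ?_ (Fin.sum_univ_add (a := n + 1) (b := k + 1) _).symm
    simp only [Fin.append_left, Fin.append_right]

lemma sup'_prod_nonneg (hN : IsNAnorm K N) {n : ℕ} (v : Fin (n + 1) → Fin m → V) :
    0 ≤ Finset.univ.sup' Finset.univ_nonempty fun i => ∏ j, N (v i j) :=
  (Finset.prod_nonneg fun j _ => hN.nonneg (v 0 j)).trans
    (Finset.le_sup' (fun i => ∏ j, N (v i j)) (Finset.mem_univ 0))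

lemma tensorPowNorm_nonneg (hN : IsNAnorm K N) (t : ⨂[K]^m V) : 0 ≤ tensorPowNorm K N m t := by
  refine Real.sInf_nonneg ?_
  rintro _ ⟨n, v, -, rfl⟩
  exact sup'_prod_nonneg hN v

lemma tensorPowNorm_tprod_le (hN : IsNAnorm K N) (v : Fin m → V) :
    tensorPowNorm K N m (tprod K v) ≤ ∏ j, N (v j) := by
  refine csInf_le ⟨0, ?_⟩ ⟨0, fun _ => v, by simp, by simp⟩
  rintro _ ⟨n, w, -, rfl⟩
  exact sup'_prod_nonneg hN w

lemma norm_apply_le_mul_tensorPowNorm {E : Type*} [SeminormedAddCommGroup E] [Module K E]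
    [IsUltrametricDist E] (hm : 0 < m) (f : ⨂[K]^m V →ₗ[K] E) {M : ℝ} (hM : 0 < M)
    (hf : ∀ v, ‖f (tprod K v)‖ ≤ M * ∏ j, N (v j)) (t : ⨂[K]^m V) :
    ‖f t‖ ≤ M * tensorPowNorm K N m t := by
  rw [← div_le_iff₀' hM]
  obtain ⟨n₀, v₀, h₀⟩ := exists_eq_sum_tprod hm t
  refine le_csInf ⟨_, n₀, v₀, h₀, rfl⟩ ?_
  rintro _ ⟨n, v, rfl, rfl⟩
  obtain ⟨i, -, hi⟩ := IsUltrametricDist.exists_norm_finsetSum_le_of_nonempty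
    Finset.univ_nonempty fun i => f (tprod K (v i))
  rw [map_sum, div_le_iff₀' hM]
  calc ‖∑ i, f (tprod K (v i))‖ ≤ M * ∏ j, N (v i j) := hi.trans (hf (v i))
    _ ≤ M * Finset.univ.sup' Finset.univ_nonempty fun i => ∏ j, N (v i j) :=
      mul_le_mul_of_nonneg_left
        (Finset.le_sup' (fun i => ∏ j, N (v i j)) (Finset.mem_univ i)) hM.le

end TensorPower

lemma alternatingMap_apply_eq_det_smul {ι R M M' : Type*} [Fintype ι] [DecidableEq ι]
    [CommRing R] [AddCommGroup M] [Module R M] [AddCommGroup M'] [Module R M']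
    (b : Basis ι R M) (f : M [⋀^ι]→ₗ[R] M') (v : ι → M) : f v = b.det v • f b := by
  suffices h : f = (LinearMap.toSpanSingleton R M' (f b)).compAlternatingMap b.det from
    congrArg (fun g => g v) h
  refine b.ext_alternating fun σ hσ => ?_
  let e : Equiv.Perm ι := Equiv.ofBijective σ (Finite.injective_iff_bijective.1 hσ)
  change f (b ∘ e) = b.det (b ∘ e) • f b
  rw [AlternatingMap.map_perm, AlternatingMap.map_perm, b.det_self, smul_assoc, one_smul]

section TopCoord

variable {K V : Type*} [Field K] [AddCommGroup V] [Module K V] {d : ℕ}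

/-- The coordinate on the line `⋀^d V` with respect to the generator `b₁ ∧ ⋯ ∧ b_d`. -/
noncomputable def topCoord (b : Basis (Fin d) K V) : ⋀[K]^d V →ₗ[K] K :=
  exteriorPower.alternatingMapLinearEquiv b.det

lemma topCoord_ιMulti (b : Basis (Fin d) K V) (v : Fin d → V) :
    topCoord b (exteriorPower.ιMulti K d v) = b.det v :=
  exteriorPower.alternatingMapLinearEquiv_apply_ιMulti _ _

lemma topCoord_smul_ιMulti (b : Basis (Fin d) K V) (ω : ⋀[K]^d V) :
    topCoord b ω • exteriorPower.ιMulti K d b = ω := by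
  suffices h : (topCoord b).smulRight (exteriorPower.ιMulti K d b) = LinearMap.id from
    congrArg (fun f => f ω) h
  refine exteriorPower.linearMap_ext (AlternatingMap.ext fun v => ?_)
  simp only [LinearMap.compAlternatingMap_apply, LinearMap.smulRight_apply, topCoord_ιMulti,
    LinearMap.id_apply]
  exact (alternatingMap_apply_eq_det_smul b _ v).symm

lemma topCoord_ne_zero (b : Basis (Fin d) K V) {ω : ⋀[K]^d V} (hω : ω ≠ 0) :
    topCoord b ω ≠ 0 := fun h => hω <| by rw [← topCoord_smul_ιMulti b ω, h, zero_smul]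

lemma tensorToExteriorPower_tprod (v : Fin d → V) :
    tensorToExteriorPower K V d (PiTensorProduct.tprod K v) = exteriorPower.ιMulti K d v :=
  Subtype.ext (by simp [tensorToExteriorPower])

end TopCoord

section ExtPowNorm

variable {K V : Type*} [NormedField K] [AddCommGroup V] [Module K V] {N N' : V → ℝ} {C : ℝ}
  {d : ℕ} {b : Basis (Fin d) K V}

lemma exists_tensorToExteriorPower_tprod_eq (hN : IsNAnorm K N) (hd : 0 < d)
    (b : Basis (Fin d) K V) (ω : ⋀[K]^d V) :
    ∃ w : Fin d → V, tensorToExteriorPower K V d (PiTensorProduct.tprod K w) = ω ∧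
      ∏ j, N (w j) = ‖topCoord b ω‖ * ∏ j, N (b j) := by
  obtain ⟨w, hw, hwN⟩ := exists_tprod_eq_smul_tprod hN hd (topCoord b ω) b
  exact ⟨w, by rw [hw, map_smul, tensorToExteriorPower_tprod, topCoord_smul_ιMulti], hwN⟩

lemma extPowNorm_le (hN : IsNAnorm K N) (hd : 0 < d) (b : Basis (Fin d) K V) (ω : ⋀[K]^d V) :
    extPowNorm K N d ω ≤ ‖topCoord b ω‖ * ∏ j, N (b j) := by
  obtain ⟨w, hw, hwN⟩ := exists_tensorToExteriorPower_tprod_eq hN hd b ω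
  exact hwN ▸ (quotNorm_le (tensorPowNorm_nonneg hN) hw).trans (tensorPowNorm_tprod_le hN w)

namespace IsAlmostOrthogonal

lemma norm_det_mul_prod_le [IsUltrametricDist K] {ι : Type*} [Fintype ι] [DecidableEq ι]
    {b : Basis ι K V} (hb : IsAlmostOrthogonal N C b) (hN : IsNAnorm K N) (v : ι → V) :
    ‖b.det v‖ * ∏ j, N (b j) ≤ C ^ Fintype.card ι * ∏ j, N (v j) := by
  rw [b.det_apply, Matrix.det_apply]
  obtain ⟨σ, -, hσ⟩ := IsUltrametricDist.exists_norm_finsetSum_le_of_nonempty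
    Finset.univ_nonempty fun σ : Equiv.Perm ι => σ.sign • ∏ i, b.toMatrix v (σ i) i
  have hterm : ‖σ.sign • ∏ i, b.toMatrix v (σ i) i‖ = ∏ i, ‖b.repr (v i) (σ i)‖ := by
    rcases Int.units_eq_one_or σ.sign with h | h <;>
      simp [h, norm_prod, Module.Basis.toMatrix_apply]
  calc _ ≤ (∏ i, ‖b.repr (v i) (σ i)‖) * ∏ j, N (b j) :=
        mul_le_mul_of_nonneg_right (hσ.trans_eq hterm)
          (Finset.prod_nonneg fun j _ => hN.nonneg _)
    _ = ∏ i, ‖b.repr (v i) (σ i)‖ * N (b (σ i)) := by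
        rw [Finset.prod_mul_distrib, Equiv.prod_comp σ fun j => N (b j)]
    _ ≤ ∏ i, C * N (v i) :=
        Finset.prod_le_prod (fun i _ => mul_nonneg (norm_nonneg _) (hN.nonneg _))
          fun i _ => hb _ _
    _ = C ^ Fintype.card ι * ∏ j, N (v j) := by
        rw [Finset.prod_mul_distrib, Finset.prod_const, Finset.card_univ]

lemma norm_topCoord_mul_prod_le [IsUltrametricDist K] (hb : IsAlmostOrthogonal N C b)
    (hN : IsNAnorm K N) (hC : 0 < C) (hd : 0 < d) (ω : ⋀[K]^d V) :
    ‖topCoord b ω‖ * ∏ j, N (b j) ≤ C ^ d * extPowNorm K N d ω := by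
  have hP : 0 < ∏ j, N (b j) := Finset.prod_pos fun j _ => hN.pos (b.ne_zero j)
  obtain ⟨w, hw, -⟩ := exists_tensorToExteriorPower_tprod_eq hN hd b ω
  rw [← div_le_iff₀' (pow_pos hC d)]
  refine le_quotNorm ⟨_, hw⟩ ?_
  rintro t rfl
  have h := norm_apply_le_mul_tensorPowNorm (N := N) (M := C ^ d / ∏ j, N (b j)) hd
    (topCoord b ∘ₗ tensorToExteriorPower K V d) (by positivity) (fun v => by
      rw [LinearMap.comp_apply, tensorToExteriorPower_tprod, topCoord_ιMulti,
        div_mul_eq_mul_div, le_div_iff₀ hP]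
      simpa using hb.norm_det_mul_prod_le hN v) t
  rwa [LinearMap.comp_apply, div_mul_eq_mul_div, le_div_iff₀ hP,
    ← div_le_iff₀' (pow_pos hC d)] at h

variable [IsUltrametricDist K] {ω : ⋀[K]^d V}

theorem log_extPowNorm_mem_Icc (hb : IsAlmostOrthogonal N C b) (hN : IsNAnorm K N) (hC : 0 < C)
    (hd : 0 < d) (hω : ω ≠ 0) :
    Real.log ‖topCoord b ω‖ + ∑ j, Real.log (N (b j)) - Real.log (extPowNorm K N d ω) ∈
      Set.Icc 0 (d * Real.log C) := by
  have hT : 0 < ‖topCoord b ω‖ := norm_pos_iff.2 (topCoord_ne_zero b hω)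
  have hP : 0 < ∏ j, N (b j) := Finset.prod_pos fun j _ => hN.pos (b.ne_zero j)
  have hle := hb.norm_topCoord_mul_prod_le hN hC hd ω
  have hE : 0 < extPowNorm K N d ω :=
    pos_of_mul_pos_right ((mul_pos hT hP).trans_le hle) (pow_pos hC d).le
  have hupper := Real.log_le_log hE (extPowNorm_le hN hd b ω)
  have hlower := Real.log_le_log (mul_pos hT hP) hle
  rw [Real.log_mul (pow_pos hC d).ne' hE.ne', Real.log_pow] at hlower
  rw [← Real.log_prod fun j _ => (hN.pos (b.ne_zero j)).ne', ← Real.log_mul hT.ne' hP.ne']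
  constructor <;> linarith

theorem abs_log_extPowNorm_sub_le (hb : IsAlmostOrthogonal N C b)
    (hb' : IsAlmostOrthogonal N' C b) (hN : IsNAnorm K N) (hN' : IsNAnorm K N') (hC : 0 < C)
    (hd : 0 < d) (hω : ω ≠ 0) :
    |(d : ℝ)⁻¹ * (Real.log (extPowNorm K N' d ω) - Real.log (extPowNorm K N d ω)) -
      (d : ℝ)⁻¹ * ∑ i, logRatio N N' (b i)| ≤ Real.log C := by
  have hd' : (0 : ℝ) < d := Nat.cast_pos.2 hd
  rw [← mul_sub, abs_mul, abs_of_pos (inv_pos.2 hd'), inv_mul_le_iff₀ hd']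
  obtain ⟨h₀, h₁⟩ := hb.log_extPowNorm_mem_Icc hN hC hd hω
  obtain ⟨h₀', h₁'⟩ := hb'.log_extPowNorm_mem_Icc hN' hC hd hω
  simp only [logRatio, Finset.sum_sub_distrib]
  rw [abs_le]
  constructor <;> linarith

end IsAlmostOrthogonal

end ExtPowNorm

/-- The relative volume of two norms is computed by the top exterior power norms:
`vol(N, N') = (1/d)·(log N'^{∧d}(ω) − log N^{∧d}(ω))` for any nonzero `ω ∈ Λ^d V`. -/
theorem relVol_eq_log_det
    (K V : Type*) [NormedField K] [IsUltrametricDist K] [CompleteSpace K]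
    [AddCommGroup V] [Module K V] [FiniteDimensional K V]
    (N N' : V → ℝ) (hN : IsNAnorm K N) (hN' : IsNAnorm K N') :
    ∀ ω : ⋀[K]^(Module.finrank K V) V, ω ≠ 0 →
      relVol K V N N' =
        (Module.finrank K V : ℝ)⁻¹ *
          (Real.log (quotNorm (tensorToExteriorPower K V (Module.finrank K V))
              (tensorPowNorm K N' (Module.finrank K V)) ω) -
           Real.log (quotNorm (tensorToExteriorPower K V (Module.finrank K V))
              (tensorPowNorm K N (Module.finrank K V)) ω)) := by
  intro ω hω
  rcases (finrank K V).eq_zero_or_pos with hd | hd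
  · simp [relVol, hd]
  refine eq_of_forall_dist_le fun ε hε => ?_
  obtain ⟨b, hb, hb', hanti⟩ := hN.exists_common_isAlmostOrthogonal_antitone hN' rfl
    (Real.one_lt_exp_iff.2 (half_pos hε))
  have hvol := hb.abs_relVol_sub_le hb' hN hN' (Real.exp_pos _) hanti hd
  have hdet := hb.abs_log_extPowNorm_sub_le hb' hN hN' (Real.exp_pos _) hd hω
  rw [Real.log_exp] at hvol hdet
  exact (dist_triangle_right _ _ _).trans ((add_le_add hvol hdet).trans_eq (add_halves ε))
end

section
/- Let d ≥ 1, let Γ ⊆ ℕ^{1+d} be an admissible graded subsemigroup, and let Φ : Γ → ℝ be superadditive and linearly bounded, i.e. there is C > 0 with |Φ(m,α)| ≤ C·m on Γ; set θ = limsup_{n→∞} sup_{α ∈ Γ_n} Φ(n,α)/n. For each k ≥ 1, let Φ_k be a superadditive real-valued function on the subsemigroup Γ_{k•} = {(kn,α) ∈ Γ : n ∈ ℕ} such that Φ_k(k,α) = Φ(k,α) for all α ∈ Γ_k and Φ_k(kn,α) ≤ Φ(kn,α) for all (kn,α) ∈ Γ_{k•}. For t ∈ ℝ let Λ_k(t)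 = {(n,α) ∈ ℕ^{1+d} : (kn,α) ∈ Γ and Φ_k(kn,α) ≥ k·n·t} be the regraded superlevel semigroup. Then for every real t < θ, k^{-d}·vol(Δ(Λ_k(t))) converges to vol(Δ(Γ^{Φ,≥t})) as k → ∞. -/
open scoped BigOperators
open Filter MeasureTheory

/-- Points of `ℕ^{1+d}`, written as a degree together with a vector in `ℕ^d`. -/
abbrev NPt (d : ℕ) := ℕ × (Fin d → ℕ)

/-- A subset of `ℕ^{1+d}` is a (graded) subsemigroup if it is closed under addition. -/
def IsGradedSubsemigroup {d : ℕ} (Γ : Set (NPt d)) : Prop :=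
  ∀ x ∈ Γ, ∀ y ∈ Γ, x + y ∈ Γ

/-- Linear growth: there is `C > 0` with `|α|₁ ≤ C·m` for all `(m, α) ∈ Γ`. -/
def HasLinearGrowth {d : ℕ} (Γ : Set (NPt d)) : Prop :=
  ∃ C : ℝ, 0 < C ∧ ∀ p ∈ Γ, (∑ i, (p.2 i : ℝ)) ≤ C * p.1

/-- The canonical embedding `ℕ^{1+d} → ℤ^{1+d}`. -/
def nptToInt {d : ℕ} (p : NPt d) : ℤ × (Fin d → ℤ) :=
  ((p.1 : ℤ), fun i => (p.2 i : ℤ))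

/-- `Γ` generates `ℤ^{1+d}` as a group. -/
def GeneratesFullLattice {d : ℕ} (Γ : Set (NPt d)) : Prop :=
  AddSubgroup.closure (nptToInt '' Γ) = ⊤

/-- An admissible graded subsemigroup of `ℕ^{1+d}`. -/
def IsAdmissible {d : ℕ} (Γ : Set (NPt d)) : Prop :=
  IsGradedSubsemigroup Γ ∧ HasLinearGrowth Γ ∧ GeneratesFullLattice Γ

/-- The canonical embedding `ℕ^{1+d} → ℝ^{1+d}`. -/
def nptToReal {d : ℕ} (p : NPt d) : ℝ × (Fin d → ℝ) :=
  ((p.1 : ℝ), fun i => (p.2 i : ℝ))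

/-- The convex cone generated by a subset `S` of a real vector space: the set of finite
nonnegative linear combinations of elements of `S`. -/
def coneGen {E : Type*} [AddCommMonoid E] [Module ℝ E] (S : Set E) : Set E :=
  {y | ∃ (n : ℕ) (c : Fin n → ℝ) (p : Fin n → E),
    (∀ i, 0 ≤ c i) ∧ (∀ i, p i ∈ S) ∧ y = ∑ i, c i • p i}

/-- The Okounkov body of a subset `Σ ⊆ ℕ^{1+d}`: the slice at height `1` of the closed convex
cone generated by `Σ` in `ℝ^{1+d}`. -/
def okounkovBody {d : ℕ} (S : Set (NPt d)) : Set (Fin d → ℝ) :=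
  {x | ((1 : ℝ), x) ∈ closure (coneGen (nptToReal '' S))}

/-- The graded piece `Γ_m` of `Γ ⊆ ℕ^{1+d}`. -/
def gradedPiece {d : ℕ} (Γ : Set (NPt d)) (m : ℕ) : Set (Fin d → ℕ) :=
  {α | (m, α) ∈ Γ}

/-- The superlevel semigroup `Γ^{Φ,≥t}` of a function `Φ` on `Γ`. -/
def superlevel {d : ℕ} (Γ : Set (NPt d)) (Φ : NPt d → ℝ) (t : ℝ) : Set (NPt d) :=
  {p ∈ Γ | p.1 * t ≤ Φ p}

/-- `θ = limsup_{n → ∞} sup_{α ∈ Γ_n} Φ(n,α)/n`. -/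
noncomputable def thetaSup {d : ℕ} (Γ : Set (NPt d)) (Φ : NPt d → ℝ) : ℝ :=
  Filter.limsup (fun n : ℕ => sSup {r | ∃ α, (n, α) ∈ Γ ∧ r = Φ (n, α) / n}) Filter.atTop


/-- The regraded superlevel semigroup `Λ_k(t) = {(n,α) : (kn,α) ∈ Γ, Φ_k(kn,α) ≥ k·n·t}`. -/
def regradedSuperlevel {d : ℕ} (Γ : Set (NPt d)) (Φk : NPt d → ℝ) (k : ℕ) (t : ℝ) :
    Set (NPt d) :=
  {p | (k * p.1, p.2) ∈ Γ ∧ (k : ℝ) * p.1 * t ≤ Φk (k * p.1, p.2)}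

/-!
Pass to closed cones in `ℝ × ℝ^d`. Let `T = Γ^{Φ,≥t}`, and let `D k` be the cone of `Λ_k(t)` with
its fibre rescaled by `k⁻¹`, so that the slice of `D k` at height one has volume
`k^{-d}·vol(Δ(Λ_k(t)))`. Since `Φ_k ≤ Φ`, every `D k` is contained in the cone of `T`. Since
`Φ_k = Φ` in degree `k`, the cone `D k` contains the degree `k` part of `T`. As `t < θ`, some
`p ∈ Γ` satisfies `Φ p > t·deg p`, and adding large multiples of `p` to elements of `Γ` shows that
the degrees occurring in `T` have greatest common divisor one. Hence, given `p ∈ T` of positive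
degree, for all large `k` there is an element `q + j • p ∈ T` of degree `k` with `q` in a fixed
finite set, and these elements, rescaled, tend to `p`. So the cone of `T` lies in the lower limit
of the `D k`, and by convexity every interior point of the cone of `T` is eventually in `D k`. The
boundary being null, the volumes of the slices converge.
-/

open Set Topology

/-! ### Lower limits of sets -/

section LowerLimit

variable {ι X : Type*} [TopologicalSpace X] {l : Filter ι} {F : ι → Set X}

/-- The lower limit of a family of sets along a filter, in the sense of Painlevé and Kuratowski:
the points all of whose neighbourhoods eventually meet the family. -/
def kuratowskiLiminf (F : ι → Set X) (l : Filter ι) : Set X :=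
  {x | ∀ U ∈ 𝓝 x, ∀ᶠ i in l, (F i ∩ U).Nonempty}

lemma isClosed_kuratowskiLiminf : IsClosed (kuratowskiLiminf F l) := by
  refine isClosed_of_closure_subset fun x hx U hU => ?_
  obtain ⟨V, hVU, hV, hxV⟩ := mem_nhds_iff.1 hU
  obtain ⟨y, hyV, hy⟩ := mem_closure_iff.1 hx V hV hxV
  exact (hy V (hV.mem_nhds hyV)).mono fun i hi => hi.mono (inter_subset_inter_right _ hVU)

lemma mem_kuratowskiLiminf_of_forall_mem {x : X} (h : ∀ i, x ∈ F i) : x ∈ kuratowskiLiminf F l :=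
  fun _ hU => .of_forall fun i => ⟨x, h i, mem_of_mem_nhds hU⟩

lemma map_mem_kuratowskiLiminf {Y : Type*} [TopologicalSpace Y] {G : ι → Set Y} {f : X → Y}
    (hf : Continuous f) (hFG : ∀ i, MapsTo f (F i) (G i)) {x : X}
    (hx : x ∈ kuratowskiLiminf F l) : f x ∈ kuratowskiLiminf G l := by
  intro U hU
  filter_upwards [hx _ (hf.continuousAt hU)] with i ⟨z, hz, hzU⟩
  exact ⟨f z, hFG i hz, hzU⟩

lemma mk_mem_kuratowskiLiminf_prod {Y : Type*} [TopologicalSpace Y] {G : ι → Set Y} {x : X} {y : Y}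
    (hx : x ∈ kuratowskiLiminf F l) (hy : y ∈ kuratowskiLiminf G l) :
    (x, y) ∈ kuratowskiLiminf (fun i => F i ×ˢ G i) l := by
  intro U hU
  obtain ⟨V, hV, W, hW, hVW⟩ := mem_nhds_prod_iff.1 hU
  filter_upwards [hx V hV, hy W hW] with i ⟨z, hz, hzV⟩ ⟨w, hw, hwW⟩
  exact ⟨(z, w), ⟨hz, hw⟩, hVW ⟨hzV, hwW⟩⟩

end LowerLimit

lemma eventually_subset_thickening_of_isCompact {ι X : Type*} [PseudoMetricSpace X]
    {l : Filter ι} {F : ι → Set X} {K : Set X} (hK : IsCompact K)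
    (hKF : K ⊆ kuratowskiLiminf F l) {δ : ℝ} (hδ : 0 < δ) :
    ∀ᶠ i in l, K ⊆ Metric.thickening δ (F i) := by
  obtain ⟨N, hNK, hN, hcover⟩ := hK.finite_cover_balls (half_pos hδ)
  have hclose : ∀ᶠ i in l, ∀ x ∈ N, (F i ∩ Metric.ball x (δ / 2)).Nonempty :=
    (eventually_all_finite hN).2 fun x hx => hKF (hNK hx) _ (Metric.ball_mem_nhds x (half_pos hδ))
  filter_upwards [hclose] with i hi y hy
  obtain ⟨x, hxN, hyx⟩ := mem_iUnion₂.1 (hcover hy)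
  obtain ⟨z, hzF, hzx⟩ := hi x hxN
  exact Metric.mem_thickening_iff.2 ⟨z, hzF, by
    linarith [dist_triangle_right y z x, Metric.mem_ball.1 hyx, Metric.mem_ball.1 hzx]⟩

section Convex

variable {E : Type*} [NormedAddCommGroup E] [NormedSpace ℝ E]

lemma mem_of_ball_subset_thickening {C : Set E} (hC : Convex ℝ C) (hCc : IsClosed C) {x : E}
    {r s : ℝ} (hr : 0 < r) (hsr : s < r) (h : Metric.ball x r ⊆ Metric.thickening s C) :
    x ∈ C := by
  -- If `f < f x` on `C`, moving from `x` by almost `r` in a direction where `f` almost attains its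
  -- norm leads farther than `s` from `C`.
  by_contra hx
  obtain ⟨f, u, hfC, hfx⟩ := geometric_hahn_banach_closed_point hC hCc hx
  have hlt : ∀ z ∈ C, f z < f x := fun z hz => (hfC z hz).trans hfx
  have hf : 0 < ‖f‖ := by
    obtain ⟨z, hz, -⟩ := Metric.mem_thickening_iff.1 (h (Metric.mem_ball_self hr))
    refine norm_pos_iff.2 fun hf => ?_
    simpa [hf] using hlt z hz
  obtain ⟨v, hv, hfv⟩ : ∃ v : E, ‖v‖ < 1 ∧ s / r * ‖f‖ < f v := by
    obtain ⟨v, hv, hfv⟩ := f.exists_lt_apply_of_lt_opNorm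
      (mul_lt_of_lt_one_left hf ((div_lt_one hr).2 hsr))
    rcases lt_abs.1 hfv with hfv | hfv
    · exact ⟨v, hv, hfv⟩
    · exact ⟨-v, by rwa [norm_neg], by rwa [map_neg]⟩
  have hmem : x + r • v ∈ Metric.ball x r := by
    simpa [norm_smul, abs_of_pos hr] using mul_lt_of_lt_one_right hr hv
  obtain ⟨z, hz, hdist⟩ := Metric.mem_thickening_iff.1 (h hmem)
  refine (hlt z hz).not_ge ?_
  have hclose : f (x + r • v) - f z ≤ ‖f‖ * s :=
    calc f (x + r • v) - f z = f (x + r • v - z) := (map_sub f _ _).symm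
      _ ≤ ‖f‖ * ‖x + r • v - z‖ := (le_abs_self _).trans (f.le_opNorm _)
      _ ≤ ‖f‖ * s := by rw [← dist_eq_norm]; gcongr
  have hfar : ‖f‖ * s < r * f v := by
    calc ‖f‖ * s = r * (s / r * ‖f‖) := by field_simp
      _ < r * f v := by gcongr
  rw [map_add, map_smul, smul_eq_mul] at hclose
  linarith

lemma eventually_mem_of_mem_interior_kuratowskiLiminf [ProperSpace E] {ι : Type*} {l : Filter ι}
    {C : ι → Set E} (hconv : ∀ i, Convex ℝ (C i)) (hclosed : ∀ i, IsClosed (C i)) {x : E}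
    (hx : x ∈ interior (kuratowskiLiminf C l)) : ∀ᶠ i in l, x ∈ C i := by
  obtain ⟨r, hr, hball⟩ := Metric.nhds_basis_closedBall.mem_iff.1 (mem_interior_iff_mem_nhds.1 hx)
  filter_upwards [eventually_subset_thickening_of_isCompact (isCompact_closedBall x r) hball
    (half_pos hr)] with i hi
  exact mem_of_ball_subset_thickening (hconv i) (hclosed i) hr (half_lt_self hr)
    (Metric.ball_subset_closedBall.trans hi)

end Convex

/-! ### Closed cones and their slices -/

/-- The lower limit of a family of closed convex cones, as a closed convex cone. -/
def coneLiminf {ι E : Type*} [AddCommMonoid E] [TopologicalSpace E] [Module ℝ E] [ContinuousAdd E]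
    [ContinuousConstSMul ℝ E] (D : ι → ProperCone ℝ E) (l : Filter ι) : ProperCone ℝ E where
  carrier := kuratowskiLiminf (fun i => (D i : Set E)) l
  zero_mem' := mem_kuratowskiLiminf_of_forall_mem fun i => zero_mem (D i)
  add_mem' hx hy := map_mem_kuratowskiLiminf continuous_add
    (fun _ _ hz => add_mem hz.1 hz.2) (mk_mem_kuratowskiLiminf_prod hx hy)
  smul_mem' c _ hx := map_mem_kuratowskiLiminf (continuous_const_smul (c : ℝ))
    (fun i _ hz => (D i).smul_mem hz c.2) hx
  isClosed' := isClosed_kuratowskiLiminf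

section Slice

variable {E : Type*} [NormedAddCommGroup E] [NormedSpace ℝ E]

/-- The slice at height `1` of a cone in `ℝ × E`. -/
def heightOneSlice (C : ProperCone ℝ (ℝ × E)) : Set E :=
  {x | ((1 : ℝ), x) ∈ C}

/-- The linear map `(s, x) ↦ (s, c • x)`; pulling back along it regrades a cone in `ℝ × E`. -/
def fiberScale (E : Type*) [NormedAddCommGroup E] [NormedSpace ℝ E] (c : ℝ) :
    ℝ × E →L[ℝ] ℝ × E :=
  (ContinuousLinearMap.id ℝ ℝ).prodMap (c • ContinuousLinearMap.id ℝ E)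

@[simp]
lemma fiberScale_apply (c : ℝ) (y : ℝ × E) : fiberScale E c y = (y.1, c • y.2) := rfl

lemma isClosed_heightOneSlice (C : ProperCone ℝ (ℝ × E)) : IsClosed (heightOneSlice C) :=
  C.isClosed.preimage (by fun_prop)

lemma convex_heightOneSlice (C : ProperCone ℝ (ℝ × E)) : Convex ℝ (heightOneSlice C) := by
  intro x hx y hy a b ha hb hab
  simpa [heightOneSlice, hab] using C.convex hx hy ha hb hab

lemma mk_one_mem_interior {C : ProperCone ℝ (ℝ × E)} {x : E}
    (hx : x ∈ interior (heightOneSlice C)) : ((1 : ℝ), x) ∈ interior (C : Set (ℝ × E)) := by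
  rw [mem_interior_iff_mem_nhds] at hx ⊢
  have hcont : ContinuousAt (fun y : ℝ × E => y.1⁻¹ • y.2) (1, x) :=
    (continuousAt_fst.inv₀ one_ne_zero).smul continuousAt_snd
  have hslice : ∀ᶠ y : ℝ × E in 𝓝 (1, x), y.1⁻¹ • y.2 ∈ heightOneSlice C :=
    hcont.eventually_mem (by simpa using hx)
  have hpos : ∀ᶠ y : ℝ × E in 𝓝 (1, x), 0 < y.1 :=
    continuousAt_fst.eventually (lt_mem_nhds one_pos)
  filter_upwards [hslice, hpos] with y hy hy0
  simpa [smul_smul, hy0.ne'] using C.smul_mem hy hy0.le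

variable [FiniteDimensional ℝ E] [MeasurableSpace E] [BorelSpace E] (μ : Measure E)
  [μ.IsAddHaarMeasure]

lemma measure_heightOneSlice_comap_fiberScale (C : ProperCone ℝ (ℝ × E)) {c : ℝ} (hc : c ≠ 0) :
    μ (heightOneSlice (C.comap (fiberScale E c))) =
      ENNReal.ofReal |(c ^ Module.finrank ℝ E)⁻¹| * μ (heightOneSlice C) :=
  Measure.addHaar_preimage_smul μ hc (heightOneSlice C)

lemma tendsto_measure_heightOneSlice {ι : Type*} {l : Filter ι} [l.IsCountablyGenerated]
    {D : ι → ProperCone ℝ (ℝ × E)} {C : ProperCone ℝ (ℝ × E)} (hDC : ∀ᶠ i in l, D i ≤ C)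
    (hCD : C ≤ coneLiminf D l) (hC : μ (heightOneSlice C) ≠ ⊤) :
    Tendsto (fun i => μ (heightOneSlice (D i))) l (𝓝 (μ (heightOneSlice C))) := by
  have hsub : ∀ᶠ i in l, heightOneSlice (D i) ⊆ heightOneSlice C :=
    hDC.mono fun i hi x hx => hi hx
  have hfrontier : ∀ᵐ x ∂μ, x ∉ frontier (heightOneSlice C) :=
    measure_eq_zero_iff_ae_notMem.1 ((convex_heightOneSlice C).addHaar_frontier μ)
  refine tendsto_measure_of_ae_tendsto_indicator l (isClosed_heightOneSlice C).measurableSet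
    (fun i => (isClosed_heightOneSlice (D i)).measurableSet)
    (isClosed_heightOneSlice C).measurableSet hC hsub ?_
  filter_upwards [hfrontier] with x hx
  by_cases hxC : x ∈ heightOneSlice C
  · have hint : x ∈ interior (heightOneSlice C) := by
      rw [← self_sdiff_frontier]
      exact ⟨hxC, hx⟩
    have hmem : ∀ᶠ i in l, ((1 : ℝ), x) ∈ (D i : Set (ℝ × E)) :=
      eventually_mem_of_mem_interior_kuratowskiLiminf (fun i => (D i).convex)
        (fun i => (D i).isClosed) (interior_mono hCD (mk_one_mem_interior hint))
    exact hmem.mono fun i hi => iff_of_true hi hxC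
  · exact hsub.mono fun i hi => iff_of_false (fun h => hxC (hi h)) hxC

end Slice

/-! ### The cone of a graded set -/

lemma coe_hull_eq_coneGen {E : Type*} [AddCommMonoid E] [Module ℝ E] (S : Set E) :
    (PointedCone.hull ℝ S : Set E) = coneGen S := by
  ext x
  rw [SetLike.mem_coe, Submodule.mem_span_set']
  constructor
  · rintro ⟨n, c, p, rfl⟩
    exact ⟨n, fun i => c i, fun i => p i, fun i => (c i).2, fun i => (p i).2, rfl⟩
  · rintro ⟨n, c, p, hc, hp, rfl⟩
    exact ⟨n, fun i => ⟨c i, hc i⟩, fun i => ⟨p i, hp i⟩, rfl⟩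

section OkounkovCone

variable {d : ℕ}

/-- The closed convex cone in `ℝ^{1+d}` generated by a subset of `ℕ^{1+d}`; its slice at height `1`
is the Okounkov body. -/
def okounkovCone (S : Set (NPt d)) : ProperCone ℝ (ℝ × (Fin d → ℝ)) :=
  Submodule.closure (PointedCone.hull ℝ (nptToReal '' S))

lemma heightOneSlice_okounkovCone (S : Set (NPt d)) :
    heightOneSlice (okounkovCone S) = okounkovBody S := by
  ext x
  change _ ∈ closure (PointedCone.hull ℝ (nptToReal '' S) : Set (ℝ × (Fin d → ℝ))) ↔ _
  rw [coe_hull_eq_coneGen]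
  rfl

lemma okounkovCone_le_iff {S : Set (NPt d)} {C : ProperCone ℝ (ℝ × (Fin d → ℝ))} :
    okounkovCone S ≤ C ↔ ∀ p ∈ S, nptToReal p ∈ C :=
  Submodule.closure_le.trans (Submodule.span_le.trans image_subset_iff)

lemma nptToReal_mem_okounkovCone {S : Set (NPt d)} {p : NPt d} (hp : p ∈ S) :
    nptToReal p ∈ okounkovCone S :=
  okounkovCone_le_iff.1 le_rfl p hp

lemma apply_nonneg_of_mem_okounkovCone {S : Set (NPt d)} (f : ℝ × (Fin d → ℝ) →L[ℝ] ℝ)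
    (hf : ∀ p ∈ S, 0 ≤ f (nptToReal p)) {y : ℝ × (Fin d → ℝ)} (hy : y ∈ okounkovCone S) :
    0 ≤ f y :=
  okounkovCone_le_iff (C := (ProperCone.positive ℝ ℝ).comap f).2 hf hy

lemma HasLinearGrowth.mono {S T : Set (NPt d)} (hT : HasLinearGrowth T) (hST : S ⊆ T) :
    HasLinearGrowth S :=
  hT.imp fun _ hC => ⟨hC.1, fun p hp => hC.2 p (hST hp)⟩

lemma HasLinearGrowth.exists_forall_le {S : Set (NPt d)} (hS : HasLinearGrowth S) :
    ∃ C : ℝ, ∀ p ∈ S, ∀ i, (p.2 i : ℝ) ≤ C * p.1 := by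
  obtain ⟨C, -, hC⟩ := hS
  refine ⟨C, fun p hp i => le_trans ?_ (hC p hp)⟩
  exact Finset.single_le_sum (f := fun i => (p.2 i : ℝ)) (fun _ _ => Nat.cast_nonneg _)
    (Finset.mem_univ i)

lemma HasLinearGrowth.eq_zero_of_fst_eq_zero {S : Set (NPt d)} (hS : HasLinearGrowth S)
    {p : NPt d} (hp : p ∈ S) (hp0 : p.1 = 0) : p = 0 := by
  obtain ⟨C, hC⟩ := hS.exists_forall_le
  refine Prod.ext hp0 (funext fun i => ?_)
  have hi : (p.2 i : ℝ) ≤ 0 := by simpa [hp0] using hC p hp i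
  exact_mod_cast hi.antisymm (Nat.cast_nonneg _)

lemma HasLinearGrowth.isBounded_okounkovBody {S : Set (NPt d)} (hS : HasLinearGrowth S) :
    Bornology.IsBounded (okounkovBody S) := by
  obtain ⟨C, hC⟩ := hS.exists_forall_le
  refine (Metric.isBounded_Icc (0 : Fin d → ℝ) (fun _ => C)).subset fun x hx => ?_
  rw [← heightOneSlice_okounkovCone] at hx
  let coord (i : Fin d) : ℝ × (Fin d → ℝ) →L[ℝ] ℝ :=
    (ContinuousLinearMap.proj i).comp (ContinuousLinearMap.snd ℝ ℝ (Fin d → ℝ))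
  refine ⟨fun i => ?_, fun i => ?_⟩
  · exact apply_nonneg_of_mem_okounkovCone (coord i) (fun p _ => Nat.cast_nonneg (p.2 i)) hx
  · have h := apply_nonneg_of_mem_okounkovCone
      (C • ContinuousLinearMap.fst ℝ ℝ (Fin d → ℝ) - coord i)
      (fun p hp => sub_nonneg.2 (hC p hp i)) hx
    simpa [coord] using h

/-! ### Degrees of graded semigroups -/

lemma IsGradedSubsemigroup.add_nsmul_mem {T : Set (NPt d)} (hT : IsGradedSubsemigroup T)
    {p q : NPt d} (hq : q ∈ T) (hp : p ∈ T) (j : ℕ) : q + j • p ∈ T := by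
  induction j with
  | zero => simpa using hq
  | succ j ih =>
    rw [succ_nsmul, ← add_assoc]
    exact hT _ ih _ hp

lemma GeneratesFullLattice.setGcd_image_fst {Γ : Set (NPt d)} (hΓ : GeneratesFullLattice Γ) :
    Nat.setGcd (Prod.fst '' Γ) = 1 := by
  set g := Nat.setGcd (Prod.fst '' Γ)
  have hle : AddSubgroup.closure (nptToInt '' Γ) ≤
      (AddSubgroup.zmultiples (g : ℤ)).comap (AddMonoidHom.fst ℤ (Fin d → ℤ)) := by
    rw [AddSubgroup.closure_le]
    rintro _ ⟨p, hp, rfl⟩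
    exact Int.mem_zmultiples_iff.2
      (Int.natCast_dvd_natCast.2 (Nat.setGcd_dvd_of_mem (mem_image_of_mem _ hp)))
  have hone : ((1 : ℤ), (0 : Fin d → ℤ)) ∈ AddSubgroup.closure (nptToInt '' Γ) := by
    rw [hΓ]
    exact AddSubgroup.mem_top _
  have hdvd : (g : ℤ) ∣ 1 := Int.mem_zmultiples_iff.1 (hle hone)
  exact Nat.dvd_one.1 (by exact_mod_cast hdvd)

lemma IsGradedSubsemigroup.eventually_gradedPiece_nonempty {T : Set (NPt d)}
    (hT : IsGradedSubsemigroup T) (hgcd : Nat.setGcd (Prod.fst '' T) = 1) :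
    ∀ᶠ n in atTop, (gradedPiece T n).Nonempty := by
  have hclosure : ∀ n ∈ AddSubmonoid.closure (Prod.fst '' T),
      n = 0 ∨ (gradedPiece T n).Nonempty := by
    intro n hn
    induction hn using AddSubmonoid.closure_induction with
    | mem n hn =>
      obtain ⟨p, hp, rfl⟩ := hn
      exact .inr ⟨p.2, hp⟩
    | zero => exact .inl rfl
    | add m n _ _ hm hn =>
      rcases hm with rfl | ⟨α, hα⟩
      · simpa using hn
      rcases hn with rfl | ⟨β, hβ⟩
      · exact .inr ⟨α, hα⟩
      · exact .inr ⟨α + β, hT _ hα _ hβ⟩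
  obtain ⟨N, hN⟩ := Nat.exists_mem_closure_of_ge (Prod.fst '' T)
  filter_upwards [eventually_ge_atTop N, eventually_gt_atTop 0] with n hn hn0
  exact (hclosure n (hN n hn (hgcd ▸ one_dvd n))).resolve_left hn0.ne'

lemma exists_finite_eventually_degree_eq {T : Set (NPt d)}
    (hT : ∀ᶠ n in atTop, (gradedPiece T n).Nonempty) {m : ℕ} (hm : 0 < m) :
    ∃ F ⊆ T, F.Finite ∧ ∀ᶠ k in atTop, ∃ q ∈ F, ∃ j : ℕ, k = q.1 + j * m := by
  obtain ⟨N, hN⟩ := eventually_atTop.1 hT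
  choose! α hα using hN
  refine ⟨(fun n => (n, α n)) '' Ico N (N + m), ?_, (finite_Ico _ _).image _, ?_⟩
  · rintro _ ⟨n, hn, rfl⟩
    exact hα n hn.1
  · filter_upwards [eventually_ge_atTop N] with k hk
    have hmem : N + (k - N) % m ∈ Ico N (N + m) :=
      ⟨Nat.le_add_right _ _, Nat.add_lt_add_left (Nat.mod_lt _ hm) _⟩
    refine ⟨_, mem_image_of_mem _ hmem, (k - N) / m, ?_⟩
    have := Nat.mod_add_div' (k - N) m
    dsimp only
    omega

lemma nptToReal_zero : nptToReal (0 : NPt d) = 0 := by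
  ext <;> simp [nptToReal]

lemma nptToReal_add_nsmul (q p : NPt d) (j : ℕ) :
    nptToReal (q + j • p) = nptToReal q + (j : ℝ) • nptToReal p := by
  ext <;> simp [nptToReal]

lemma nptToReal_mem_coneLiminf {T : Set (NPt d)} (hT : IsGradedSubsemigroup T)
    (hne : ∀ᶠ n in atTop, (gradedPiece T n).Nonempty) {D : ℕ → ProperCone ℝ (ℝ × (Fin d → ℝ))}
    (hD : ∀ᶠ k in atTop, ∀ α ∈ gradedPiece T k, nptToReal (k, α) ∈ D k) {p : NPt d} (hp : p ∈ T)
    (hp0 : 0 < p.1) : nptToReal p ∈ coneLiminf D atTop := by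
  intro U hU
  obtain ⟨F, hFT, hF, hdeg⟩ := exists_finite_eventually_degree_eq hne hp0
  let v (q : NPt d) : ℝ × (Fin d → ℝ) := (p.1 : ℝ) • nptToReal q - (q.1 : ℝ) • nptToReal p
  have hnear : ∀ᶠ k : ℕ in atTop, ∀ q ∈ F, nptToReal p + (k : ℝ)⁻¹ • v q ∈ U := by
    refine (eventually_all_finite hF).2 fun q _ => ?_
    have hlim : Tendsto (fun k : ℕ => nptToReal p + (k : ℝ)⁻¹ • v q) atTop (𝓝 (nptToReal p)) := by
      simpa using (tendsto_inv_atTop_nhds_zero_nat (𝕜 := ℝ)).smul_const (v q) |>.const_add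
        (nptToReal p)
    exact hlim hU
  filter_upwards [hD, hdeg, hnear, eventually_gt_atTop 0] with k hDk ⟨q, hq, j, hk⟩ hU hk0
  have hmem : nptToReal (q + j • p) ∈ D k := by
    have hfst : (q + j • p).1 = k := by simp [hk]
    have := hDk (q + j • p).2
    rw [← hfst] at this ⊢
    exact this (hT.add_nsmul_mem (hFT hq) hp j)
  -- Since `k = q.1 + j * p.1`, this multiple of `q + j • p` differs from `p` by `k⁻¹ • v q`.
  refine ⟨((k : ℝ)⁻¹ * p.1) • nptToReal (q + j • p), (D k).smul_mem hmem (by positivity), ?_⟩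
  suffices ((k : ℝ)⁻¹ * p.1) • nptToReal (q + j • p) = nptToReal p + (k : ℝ)⁻¹ • v q from
    this ▸ hU q hq
  have hk' : (k : ℝ) = q.1 + j * p.1 := by exact_mod_cast hk
  have hsplit : nptToReal p = ((k : ℝ)⁻¹ * (q.1 + j * p.1)) • nptToReal p := by
    rw [← hk', inv_mul_cancel₀ (by positivity), one_smul]
  rw [nptToReal_add_nsmul]
  nth_rewrite 2 [hsplit]
  module

lemma okounkovCone_le_coneLiminf {T : Set (NPt d)} (hT : IsGradedSubsemigroup T)
    (hgrowth : HasLinearGrowth T) (hne : ∀ᶠ n in atTop, (gradedPiece T n).Nonempty)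
    {D : ℕ → ProperCone ℝ (ℝ × (Fin d → ℝ))}
    (hD : ∀ᶠ k in atTop, ∀ α ∈ gradedPiece T k, nptToReal (k, α) ∈ D k) :
    okounkovCone T ≤ coneLiminf D atTop := by
  refine okounkovCone_le_iff.2 fun p hp => ?_
  rcases p.1.eq_zero_or_pos with hp0 | hp0
  · rw [hgrowth.eq_zero_of_fst_eq_zero hp hp0, nptToReal_zero]
    exact zero_mem _
  · exact nptToReal_mem_coneLiminf hT hne hD hp hp0

/-! ### Superlevel semigroups -/

section Superlevel

variable {Γ : Set (NPt d)} {Φ : NPt d → ℝ} {t : ℝ}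

lemma exists_lt_apply_of_lt_thetaSup (hne : ∀ᶠ n in atTop, (gradedPiece Γ n).Nonempty)
    (hbdd : ∃ C : ℝ, ∀ p ∈ Γ, -(C * p.1) ≤ Φ p) (ht : t < thetaSup Γ Φ) :
    ∃ p ∈ Γ, p.1 * t < Φ p := by
  obtain ⟨C, hC⟩ := hbdd
  by_contra! hle
  have hslope : ∀ n : ℕ, 0 < n → ∀ r ∈ {r | ∃ α, (n, α) ∈ Γ ∧ r = Φ (n, α) / n}, r ≤ t := by
    rintro n hn _ ⟨α, hα, rfl⟩
    rw [div_le_iff₀' (by positivity)]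
    exact hle _ hα
  have hlower : ∀ᶠ n : ℕ in atTop, -C ≤ sSup {r | ∃ α, (n, α) ∈ Γ ∧ r = Φ (n, α) / n} := by
    filter_upwards [hne, eventually_gt_atTop 0] with n ⟨α, hα⟩ hn
    refine le_csSup_of_le ⟨t, hslope n hn⟩ ⟨α, hα, rfl⟩ ?_
    rw [le_div_iff₀ (by positivity), neg_mul]
    exact hC _ hα
  refine ht.not_ge (limsup_le_of_le (isBoundedUnder_of_eventually_ge hlower).isCoboundedUnder_le ?_)
  filter_upwards [hne, eventually_gt_atTop 0] with n ⟨α, hα⟩ hn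
  exact csSup_le ⟨_, α, hα, rfl⟩ (hslope n hn)

lemma isGradedSubsemigroup_superlevel (hΓ : IsGradedSubsemigroup Γ)
    (hsuper : ∀ x ∈ Γ, ∀ y ∈ Γ, Φ x + Φ y ≤ Φ (x + y)) :
    IsGradedSubsemigroup (superlevel Γ Φ t) := by
  rintro x ⟨hx, hxt⟩ y ⟨hy, hyt⟩
  refine ⟨hΓ x hx y hy, ?_⟩
  calc ((x + y).1 : ℝ) * t = x.1 * t + y.1 * t := by push_cast [Prod.fst_add]; ring
    _ ≤ Φ x + Φ y := add_le_add hxt hyt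
    _ ≤ Φ (x + y) := hsuper x hx y hy

lemma add_nsmul_le_apply_add_nsmul (hΓ : IsGradedSubsemigroup Γ)
    (hsuper : ∀ x ∈ Γ, ∀ y ∈ Γ, Φ x + Φ y ≤ Φ (x + y))
    {p q : NPt d} (hq : q ∈ Γ) (hp : p ∈ Γ) (j : ℕ) :
    Φ q + j * Φ p ≤ Φ (q + j • p) := by
  induction j with
  | zero => simp
  | succ j ih =>
    have := hsuper _ (hΓ.add_nsmul_mem hq hp j) _ hp
    rw [succ_nsmul, ← add_assoc]
    push_cast
    linarith

lemma eventually_add_nsmul_mem_superlevel (hΓ : IsGradedSubsemigroup Γ)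
    (hsuper : ∀ x ∈ Γ, ∀ y ∈ Γ, Φ x + Φ y ≤ Φ (x + y))
    {p q : NPt d} (hq : q ∈ Γ) (hp : p ∈ Γ) (hpt : p.1 * t < Φ p) :
    ∀ᶠ j : ℕ in atTop, q + j • p ∈ superlevel Γ Φ t := by
  have hlarge : ∀ᶠ j : ℕ in atTop, q.1 * t - Φ q ≤ j * (Φ p - p.1 * t) :=
    (tendsto_natCast_atTop_atTop.atTop_mul_const (sub_pos.2 hpt)).eventually_ge_atTop _
  filter_upwards [hlarge] with j hj
  refine ⟨hΓ.add_nsmul_mem hq hp j, ?_⟩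
  have := add_nsmul_le_apply_add_nsmul hΓ hsuper hq hp j
  simp only [Prod.fst_add, Prod.smul_fst, smul_eq_mul, Nat.cast_add, Nat.cast_mul]
  linarith

lemma setGcd_image_fst_superlevel (hΓ : IsGradedSubsemigroup Γ)
    (hsuper : ∀ x ∈ Γ, ∀ y ∈ Γ, Φ x + Φ y ≤ Φ (x + y))
    {p : NPt d} (hp : p ∈ Γ) (hpt : p.1 * t < Φ p) :
    Nat.setGcd (Prod.fst '' superlevel Γ Φ t) = Nat.setGcd (Prod.fst '' Γ) := by
  refine Nat.dvd_antisymm (Nat.dvd_setGcd_iff.2 ?_) (Nat.setGcd_mono (image_mono (sep_subset _ _)))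
  have hdvd : ∀ q ∈ superlevel Γ Φ t, Nat.setGcd (Prod.fst '' superlevel Γ Φ t) ∣ q.1 :=
    fun q hq => Nat.setGcd_dvd_of_mem (mem_image_of_mem _ hq)
  rintro _ ⟨q, hq, rfl⟩
  obtain ⟨j, hj⟩ := (eventually_add_nsmul_mem_superlevel hΓ hsuper hq hp hpt).exists
  refine (Nat.dvd_add_left ?_).1 (hdvd _ hj)
  exact (hdvd p ⟨hp, hpt.le⟩).mul_left j

end Superlevel

section Regraded

variable {Γ : Set (NPt d)} {Φ Ψ : NPt d → ℝ} {k : ℕ} {t : ℝ}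

lemma nptToReal_mem_comap_fiberScale {α : Fin d → ℕ} (hα : (k, α) ∈ superlevel Γ Φ t)
    (hle : Φ (k, α) ≤ Ψ (k, α)) :
    nptToReal (k, α) ∈ (okounkovCone (regradedSuperlevel Γ Ψ k t)).comap
      (fiberScale (Fin d → ℝ) k) := by
  have hmem : (1, α) ∈ regradedSuperlevel Γ Ψ k t := by
    simpa [regradedSuperlevel] using And.intro hα.1 (hα.2.trans hle)
  simpa [nptToReal] using
    (okounkovCone _).smul_mem (nptToReal_mem_okounkovCone hmem) (Nat.cast_nonneg k)

lemma comap_fiberScale_okounkovCone_le (hk : k ≠ 0) (hle : ∀ x ∈ Γ, k ∣ x.1 → Ψ x ≤ Φ x) :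
    (okounkovCone (regradedSuperlevel Γ Ψ k t)).comap (fiberScale (Fin d → ℝ) k) ≤
      okounkovCone (superlevel Γ Φ t) := by
  have hk' : (k : ℝ) ≠ 0 := Nat.cast_ne_zero.2 hk
  have hinv : okounkovCone (regradedSuperlevel Γ Ψ k t) ≤
      (okounkovCone (superlevel Γ Φ t)).comap (fiberScale (Fin d → ℝ) (k : ℝ)⁻¹) := by
    rw [okounkovCone_le_iff]
    rintro ⟨n, α⟩ ⟨hΓ, hΨ⟩
    have hmem : (k * n, α) ∈ superlevel Γ Φ t :=
      ⟨hΓ, by simpa using hΨ.trans (hle _ hΓ (dvd_mul_right k n))⟩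
    simpa [nptToReal, hk'] using (okounkovCone _).smul_mem (nptToReal_mem_okounkovCone hmem)
      (inv_nonneg.2 (Nat.cast_nonneg k))
  intro y hy
  simpa [smul_smul, hk'] using hinv hy

end Regraded

end OkounkovCone

theorem vol_regradedSuperlevel_tendsto_general {d : ℕ} {Γ : Set (NPt d)} (hΓ : IsAdmissible Γ)
    {Φ : NPt d → ℝ} (hsuper : ∀ x ∈ Γ, ∀ y ∈ Γ, Φ x + Φ y ≤ Φ (x + y)) {Φk : ℕ → NPt d → ℝ}
    (hΦkeq : ∀ k, 1 ≤ k → ∀ α : Fin d → ℕ, (k, α) ∈ Γ → Φk k (k, α) = Φ (k, α))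
    (hΦkle : ∀ k, 1 ≤ k → ∀ x ∈ Γ, k ∣ x.1 → Φk k x ≤ Φ x) {t : ℝ}
    (ht : ∃ p ∈ Γ, p.1 * t < Φ p) :
    Tendsto
      (fun k : ℕ => ((k : ℝ) ^ d)⁻¹ *
        (volume (okounkovBody (regradedSuperlevel Γ (Φk k) k t))).toReal)
      atTop (𝓝 (volume (okounkovBody (superlevel Γ Φ t))).toReal) := by
  obtain ⟨hsemi, hgrowth, hgen⟩ := hΓ
  obtain ⟨p, hp, hpt⟩ := ht
  have hTsemi : IsGradedSubsemigroup (superlevel Γ Φ t) :=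
    isGradedSubsemigroup_superlevel hsemi hsuper
  have hTgrowth : HasLinearGrowth (superlevel Γ Φ t) := hgrowth.mono (sep_subset _ _)
  have hTne : ∀ᶠ n in atTop, (gradedPiece (superlevel Γ Φ t) n).Nonempty :=
    hTsemi.eventually_gradedPiece_nonempty
      ((setGcd_image_fst_superlevel hsemi hsuper hp hpt).trans hgen.setGcd_image_fst)
  have hfin : volume (heightOneSlice (okounkovCone (superlevel Γ Φ t))) ≠ ⊤ := by
    rw [heightOneSlice_okounkovCone]
    exact hTgrowth.isBounded_okounkovBody.measure_lt_top.ne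
  let D (k : ℕ) := (okounkovCone (regradedSuperlevel Γ (Φk k) k t)).comap
    (fiberScale (Fin d → ℝ) k)
  have hDle : ∀ᶠ k in atTop, D k ≤ okounkovCone (superlevel Γ Φ t) :=
    (eventually_ge_atTop 1).mono fun k hk =>
      comap_fiberScale_okounkovCone_le (by omega) (hΦkle k hk)
  have hleD : okounkovCone (superlevel Γ Φ t) ≤ coneLiminf D atTop :=
    okounkovCone_le_coneLiminf hTsemi hTgrowth hTne <| (eventually_ge_atTop 1).mono
      fun k hk α hα => nptToReal_mem_comap_fiberScale hα (hΦkeq k hk α hα.1).ge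
  have hlim := (ENNReal.tendsto_toReal hfin).comp
    (tendsto_measure_heightOneSlice volume hDle hleD hfin)
  rw [heightOneSlice_okounkovCone] at hlim
  refine hlim.congr' ((eventually_ge_atTop 1).mono fun k hk => ?_)
  have hk0 : (k : ℝ) ≠ 0 := by positivity
  simp [D, measure_heightOneSlice_comap_fiberScale volume _ hk0, heightOneSlice_okounkovCone]

/-- Approximation of superlevel Okounkov bodies: if `Φ_k` is superadditive on
`Γ_{k•} = {(kn,α) ∈ Γ}`, agrees with `Φ` in degree `k` and is dominated by `Φ` on `Γ_{k•}`,
then for every `t < θ`, `k^{-d}·vol(Δ(Λ_k(t))) → vol(Δ(Γ^{Φ,≥t}))` as `k → ∞`. -/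
theorem vol_regradedSuperlevel_tendsto
    (d : ℕ) (hd : 1 ≤ d) (Γ : Set (NPt d)) (hΓ : IsAdmissible Γ)
    (Φ : NPt d → ℝ)
    (hsuper : ∀ x ∈ Γ, ∀ y ∈ Γ, Φ x + Φ y ≤ Φ (x + y))
    (hbdd : ∃ C : ℝ, 0 < C ∧ ∀ p ∈ Γ, |Φ p| ≤ C * p.1)
    (Φk : ℕ → NPt d → ℝ)
    (hΦksuper : ∀ k, 1 ≤ k → ∀ x ∈ Γ, ∀ y ∈ Γ, k ∣ x.1 → k ∣ y.1 →
      Φk k x + Φk k y ≤ Φk k (x + y))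
    (hΦkeq : ∀ k, 1 ≤ k → ∀ α : Fin d → ℕ, (k, α) ∈ Γ → Φk k (k, α) = Φ (k, α))
    (hΦkle : ∀ k, 1 ≤ k → ∀ x ∈ Γ, k ∣ x.1 → Φk k x ≤ Φ x) :
    ∀ t : ℝ, t < thetaSup Γ Φ →
      Filter.Tendsto
        (fun k : ℕ => ((k : ℝ) ^ d)⁻¹ *
          (volume (okounkovBody (regradedSuperlevel Γ (Φk k) k t))).toReal)
        Filter.atTop
        (nhds ((volume (okounkovBody (superlevel Γ Φ t))).toReal)) :=
  fun _ ht => vol_regradedSuperlevel_tendsto_general hΓ hsuper hΦkeq hΦkle <|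
    exists_lt_apply_of_lt_thetaSup
      (hΓ.1.eventually_gradedPiece_nonempty hΓ.2.2.setGcd_image_fst)
      (hbdd.imp fun _ hC p hp => (abs_le.1 (hC.2 p hp)).1) ht
end
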